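/- Assume n ≥ 3, d ≥ 2, dim(R/I) ≤ 1, and that for every prime ideal p ⊇ I the localized ideal I·R_p can be generated by at most height(p)+1 elements. Then μ₀(I) ≥ ⌊((n−2)(d−1)−1)/2⌋; equivalently, min{indeg(H_1), indeg(H⁰_m(H_1)) − d} ≤ ⌈(n(d−1)+1)/2⌉. -/

import Mathlib

/-!
Write `𝔪` for the irrelevant ideal, `S = n (d - 1)` and `ν₀ = ⌊(S + 2) / 2⌋`. It suffices to find either
a syzygy with coefficients of degree at most `ν₀ - d`, or an `𝔪`-torsion class of syzygies with
coefficients of degree `ν₀`, which is not a Koszul boundary. Suppose that neither exists.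

*Reduction to an infinite field.* Koszul boundaries over the algebraic closure `K` of `k` can be
detected after applying `k`-linear functionals to all coefficients (`kB_coeffMap`,
`kB_of_coeffMap`), so the assumption passes to `K`. The dimension hypothesis is used as the absence
of chains of primes `I ⊆ P ⊊ Q ⊊ 𝔪`; it passes to `K` by contracting such a chain along the
integral extension `k[X] → K[X]` (`no_chain`).

*A general complete intersection.* As `dim R ⧸ I ≤ 1`, general members `g₁, …, g_{n-1}` of the
linear system spanned by the `f_i` form a regular sequence (`exists_seq`). Let `𝔟` be the ideal they
generate and complete them by `p`, `q` to a basis of the linear system, so that `I = 𝔟 + (p, q)`. A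
syzygy is determined up to Koszul boundaries by the coefficients `A`, `B` of `p`, `q` modulo `𝔟`,
subject to `A p + B q ∈ 𝔟`, and it is a boundary exactly when `(A, B) ≡ y (-q, p)` modulo `𝔟` for
some `y` (`exists_syz`, `kB_proj`, `kB_of_proj`).

*The Hilbert function.* Since there are only Koszul syzygies in low degrees, for `ν ≤ ν₀` the value
`H_{R/I}(ν)` is the second difference `H(ν) - 2 H(ν - d) + H(ν - 2 d)` of `H = H_{R/𝔟}`, minus the
dimension of `((𝔟 : (p, q)) / 𝔟)_{ν - 2 d}` (`hilb_formula`). Let `j = S - ν₀` and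
`t = ν₀ - j ∈ {1, 2}`. The difference `H(ν) - H(ν - d)` is the Hilbert function `h` of a complete
intersection of `n` forms of degree `d`, symmetric about `S / 2` and strictly increasing up to
there (`hCI_symm`, `hCI_lt`), so `h(j) = h(ν₀)` and `h(j - d) < h(ν₀ - d)`. Multiplication by
`ℓ ^ t`, for a linear form `ℓ` regular modulo `𝔟`, is injective on `(𝔟 : (p, q)) / 𝔟`. Together
these give `H_{R/I}(ν₀) < H_{R/I}(j)`. Hence there is `u ∉ I` of degree `j` with `ℓ ^ t u ∈ I`
(`exists_of_hilb_lt`).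

*Duality.* For `N > j` we have `u ∉ I + (ℓ ^ N)`, and `R ⧸ (𝔟, ℓ ^ N)` is an Artinian ring with
one-dimensional socle. By duality there (`GorT.dual`) some `w` satisfies `w I ⊆ 𝔟 + (ℓ ^ N)` and
`u w ∉ 𝔟 + (ℓ ^ N)`. Writing `p w ≡ ℓ ^ N B` and `q w ≡ ℓ ^ N A` modulo `𝔟` gives a syzygy with last
coefficients `(A, -B)`, whose degree turns out to be `ν₀`. It is killed by `ℓ ^ N` and by `I` modulo
boundaries, so it is torsion. Were it a boundary, some `w + ℓ ^ N y` would multiply `I` into `𝔟`;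
then `ℓ ^ t u (w + ℓ ^ N y) ∈ 𝔟`, so `u (w + ℓ ^ N y) ∈ 𝔟` by regularity of `ℓ`, contradicting
`u w ∉ 𝔟 + (ℓ ^ N)` (`exists_torsion`). This contradicts the assumption (`core`).

*Gorenstein duality by hand.* The predicate `GorT` records regular sequences together with the
one-dimensionality of the socle of the eventual Artinian quotient, up to a degree shift. It holds
for the variables (`gorT_varIdeal`) and is inherited by quotients by further regular elements
(`GorT.step`), which avoids any appeal to canonical modules.
-/

open MvPolynomial

noncomputable section

/-- The irrelevant maximal ideal `m = (X₁, …, X_n)`. -/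
def mIdeal (k : Type*) [Field k] (n : ℕ) : Ideal (MvPolynomial (Fin n) k) :=
  Ideal.span (Set.range (X : Fin n → MvPolynomial (Fin n) k))

/-- The (first) Koszul boundaries `B₁ ⊆ R^{n+1}`. -/
def koszulB1 {k : Type*} [Field k] {n : ℕ}
    (f : Fin (n+1) → MvPolynomial (Fin n) k) :
    Submodule (MvPolynomial (Fin n) k) (Fin (n+1) → MvPolynomial (Fin n) k) :=
  Submodule.span (MvPolynomial (Fin n) k)
    {v | ∃ i j : Fin (n+1), i < j ∧ v = Pi.single j (f i) - Pi.single i (f j)}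

/-- `(H₁)_ν ≠ 0`. -/
def H1Nonzero {k : Type*} [Field k] {n : ℕ}
    (f : Fin (n+1) → MvPolynomial (Fin n) k) (d ν : ℕ) : Prop :=
  ∃ a : Fin (n+1) → MvPolynomial (Fin n) k, ∃ e : ℕ, ν = e + d ∧
    (∀ i, (a i).IsHomogeneous e) ∧ (∑ i, a i * f i) = 0 ∧ a ∉ koszulB1 f

/-- `(H⁰_m(H₁))_ν ≠ 0`: there is a degree-`ν` syzygy `a` of `f`, not a Koszul boundary,
some power of `m` multiplying `a` into the Koszul boundaries. -/
def H0mH1Nonzero {k : Type*} [Field k] {n : ℕ}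
    (f : Fin (n+1) → MvPolynomial (Fin n) k) (d ν : ℕ) : Prop :=
  ∃ a : Fin (n+1) → MvPolynomial (Fin n) k, ∃ e : ℕ, ν = e + d ∧
    (∀ i, (a i).IsHomogeneous e) ∧ (∑ i, a i * f i) = 0 ∧
    (∃ N : ℕ, ∀ g ∈ (mIdeal k n) ^ N, g • a ∈ koszulB1 f) ∧ a ∉ koszulB1 f

/-- `(I^sat)_ν ≠ 0`: there is a nonzero homogeneous `r` of degree `ν` with `m^N r ⊆ I`
for some `N`. -/
def IsatNonzero {k : Type*} [Field k] {n : ℕ}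
    (I : Ideal (MvPolynomial (Fin n) k)) (ν : ℕ) : Prop :=
  ∃ r : MvPolynomial (Fin n) k, r ≠ 0 ∧ r.IsHomogeneous ν ∧
    ∃ N : ℕ, ∀ g ∈ (mIdeal k n) ^ N, g * r ∈ I

/-- The initial degree, as an extended natural number. -/
def indegE (s : Set ℕ) : ℕ∞ := sInf ((↑) '' s)

/-! ### Differences of Hilbert functions -/

/-- The difference operator `(Δ_d a)(i) = a(i) - a(i - d)` on integer sequences indexed by `ℤ`:
the effect on Hilbert functions of killing a nonzerodivisor of degree `d`. -/
def dOp (d : ℤ) : Module.End ℤ (ℤ → ℤ) where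
  toFun a := fun i => a i - a (i - d)
  map_add' a b := by ext i; simp; ring
  map_smul' c a := by ext i; simp; ring

/-- The window sum `(S_d a)(i) = a(i) + a(i - 1) + ⋯ + a(i - d + 1)`. -/
def sOp (d : ℕ) : Module.End ℤ (ℤ → ℤ) where
  toFun a := fun i => ∑ j ∈ Finset.range d, a (i - j)
  map_add' a b := by ext i; simp [Finset.sum_add_distrib]
  map_smul' c a := by ext i; simp [Finset.mul_sum]

@[simp] lemma dOp_apply (d : ℤ) (a : ℤ → ℤ) (i : ℤ) : dOp d a i = a i - a (i - d) := rfl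

lemma sOp_apply (d : ℕ) (a : ℤ → ℤ) (i : ℤ) :
    sOp d a i = ∑ j ∈ Finset.range d, a (i - j) := rfl

lemma dOp_one_mul_sOp (d : ℕ) : dOp 1 * sOp d = dOp d := by
  refine LinearMap.ext fun a => funext fun i => ?_
  simp only [Module.End.mul_apply, dOp_apply, sOp_apply, ← Finset.sum_sub_distrib]
  have := Finset.sum_range_sub' (fun j : ℕ => a (i - j)) d
  simp only [Nat.cast_zero, sub_zero] at this
  rw [← this]
  refine Finset.sum_congr rfl fun j _ => ?_
  push_cast
  ring_nf

lemma sOp_mul_dOp_one (d : ℕ) : sOp d * dOp 1 = dOp d := by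
  rw [← dOp_one_mul_sOp]
  refine LinearMap.ext fun a => funext fun i => ?_
  simp only [Module.End.mul_apply, dOp_apply, sOp_apply, ← Finset.sum_sub_distrib]
  refine Finset.sum_congr rfl fun j _ => ?_
  ring_nf

/-- The coefficient sequence of `(1 + t + ⋯ + t^{d-1})^n`, that is, the Hilbert function of a
complete intersection of `n` forms of degree `d` in `n` variables. -/
def hCI (d n : ℕ) : ℤ → ℤ := (sOp d ^ n) (Pi.single 0 1)

/-- If `Δ₁^n ρ` is the Hilbert function of the ground field, then `Δ_d^n ρ = hCI d n`. -/
lemma dOp_pow_eq_hCI (d n : ℕ) (ρ : ℤ → ℤ) (h : (dOp 1 ^ n) ρ = Pi.single 0 1) :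
    (dOp d ^ n) ρ = hCI d n := by
  have hc : Commute (sOp d) (dOp 1) := by
    show _ * _ = _ * _
    rw [sOp_mul_dOp_one, dOp_one_mul_sOp]
  rw [← sOp_mul_dOp_one, hc.mul_pow, Module.End.mul_apply, h, hCI]

lemma hCI_succ (d n : ℕ) (i : ℤ) :
    hCI d (n + 1) i = ∑ j ∈ Finset.range d, hCI d n (i - j) := by
  rw [hCI, pow_succ', Module.End.mul_apply, sOp_apply]; rfl

lemma hCI_zero (d : ℕ) : hCI d 0 = Pi.single 0 1 := by simp [hCI]

lemma hCI_neg (d n : ℕ) : ∀ i : ℤ, i < 0 → hCI d n i = 0 := by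
  induction n with
  | zero => intro i hi; rw [hCI_zero, Pi.single_eq_of_ne hi.ne]
  | succ n ih =>
    intro i hi
    rw [hCI_succ]
    exact Finset.sum_eq_zero fun j _ => ih _ (by omega)

lemma hCI_symm (c n : ℕ) : ∀ i : ℤ, hCI (c + 1) n (n * c - i) = hCI (c + 1) n i := by
  induction n with
  | zero =>
    intro i
    rw [hCI_zero]
    by_cases h : i = 0
    · simp [h]
    · rw [Pi.single_eq_of_ne h, Pi.single_eq_of_ne (by simpa using h)]
  | succ n ih =>
    intro i
    rw [hCI_succ, hCI_succ, ← Finset.sum_range_reflect]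
    refine Finset.sum_congr rfl fun j hj => ?_
    have hj := Finset.mem_range.1 hj
    rw [← ih]
    congr 1
    have : ((c + 1 - 1 - j : ℕ) : ℤ) = c - j := by omega
    rw [this]
    push_cast
    ring

lemma hCI_succ_sub (d n : ℕ) (i : ℤ) :
    hCI d (n + 1) i - hCI d (n + 1) (i - 1) = hCI d n i - hCI d n (i - d) := by
  have := congrFun (LinearMap.congr_fun (dOp_one_mul_sOp d) (hCI d n)) i
  simpa [Module.End.mul_apply, hCI, pow_succ'] using this

lemma hCI_one (c : ℕ) (i : ℤ) (h0 : 0 ≤ i) (h1 : i ≤ c) : hCI (c + 1) 1 i = 1 := by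
  rw [hCI_succ, Finset.sum_eq_single i.toNat]
  · rw [hCI_zero]
    have : i - (i.toNat : ℤ) = 0 := by omega
    rw [this]; simp
  · intro b _ hb
    rw [hCI_zero, Pi.single_eq_of_ne]
    omega
  · intro h
    exact absurd (Finset.mem_range.2 (by omega)) h

lemma hCI_lt_of_step (d n : ℕ) (m : ℤ)
    (hstep : ∀ i : ℤ, 0 ≤ i → 2 * i ≤ m → hCI d n (i - 1) < hCI d n i) :
    ∀ (t : ℕ) (i : ℤ), 0 ≤ i → 2 * i ≤ m → hCI d n (i - (t + 1)) < hCI d n i := by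
  intro t
  induction t with
  | zero => intro i h0 h1; simpa using hstep i h0 h1
  | succ t ih =>
    intro i h0 h1
    refine lt_of_le_of_lt ?_ (hstep i h0 h1)
    rcases eq_or_lt_of_le h0 with h | h
    · rw [hCI_neg _ _ _ (by push_cast; omega), hCI_neg _ _ _ (by omega)]
    · have := ih (i - 1) (by omega) (by omega)
      push_cast
      rw [show i - ((t : ℤ) + 1 + 1) = i - 1 - (t + 1) by ring]
      exact this.le

/-- For `n ≥ 2` the sequence `hCI (c + 1) n` increases strictly up to its centre of symmetry. -/
lemma hCI_step (c n : ℕ) : ∀ i : ℤ, 0 ≤ i → 2 * i ≤ ((n + 2 : ℕ) : ℤ) * c →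
    hCI (c + 1) (n + 2) (i - 1) < hCI (c + 1) (n + 2) i := by
  induction n with
  | zero =>
    intro i h0 h1
    have := hCI_succ_sub (c + 1) 1 i
    rw [hCI_one c i h0 (by push_cast at h1; omega), hCI_neg _ _ (i - (c + 1 : ℕ))
      (by push_cast at h1 ⊢; omega)] at this
    simp only [zero_add] at *
    linarith
  | succ n ih =>
    intro i h0 h1
    have hs := hCI_succ_sub (c + 1) (n + 2) i
    have hlt := hCI_lt_of_step (c + 1) (n + 2) _ ih
    suffices hCI (c + 1) (n + 2) (i - (c + 1 : ℕ)) < hCI (c + 1) (n + 2) i by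
      have e : n + 1 + 2 = n + 2 + 1 := rfl
      rw [e]
      linarith
    by_cases h2 : 2 * i ≤ ((n + 2 : ℕ) : ℤ) * c
    · have := hlt c i h0 h2
      push_cast at this ⊢
      exact this
    · -- past the centre: reflect `i` before comparing
      rw [← hCI_symm c (n + 2) i]
      have hi : (0 : ℤ) ≤ ((n + 2 : ℕ) : ℤ) * c - i := by
        push_cast at h1 ⊢
        nlinarith
      have := hlt (((n + 2 : ℕ) : ℤ) * c - i - (i - (c + 1 : ℕ)) - 1).toNat
        (((n + 2 : ℕ) : ℤ) * c - i) hi (by omega)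
      have h3 : (0 : ℤ) ≤ ((n + 2 : ℕ) : ℤ) * c - i - (i - (c + 1 : ℕ)) - 1 := by
        push_cast at h1 ⊢
        nlinarith
      rw [Int.toNat_of_nonneg h3] at this
      convert this using 2
      ring

lemma hCI_lt (c n : ℕ) (hn : 2 ≤ n) (i' i : ℤ) (h0 : 0 ≤ i) (h1 : 2 * i ≤ n * c)
    (hi : i' < i) : hCI (c + 1) n i' < hCI (c + 1) n i := by
  obtain ⟨n, rfl⟩ := Nat.exists_eq_add_of_le' hn
  have := hCI_lt_of_step (c + 1) (n + 2) _ (hCI_step c n) (i - i' - 1).toNat i h0 h1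
  rw [Int.toNat_of_nonneg (by omega)] at this
  convert this using 2
  ring

/-! ### Regular elements and graded ideals -/

section Graded

variable {K R : Type*} [Field K] [CommRing R] [Algebra K R]

/-- Multiplication by `z` is injective on `R ⧸ q`. -/
def NZ (q : Ideal R) (z : R) : Prop := ∀ c, z * c ∈ q → c ∈ q

/-- The colon ideal `q : z`. -/
def colI (q : Ideal R) (z : R) : Ideal R := Submodule.comap (LinearMap.mulLeft R z) q

lemma mem_colI {q : Ideal R} {z c : R} : c ∈ colI q z ↔ z * c ∈ q := Iff.rfl

/-- The ideal `q + (z)`. -/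
def adj (q : Ideal R) (z : R) : Ideal R := q ⊔ Ideal.span {z}

lemma mem_adj {q : Ideal R} {z a : R} : a ∈ adj q z ↔ ∃ c, a - z * c ∈ q := by
  rw [adj, Submodule.mem_sup]
  constructor
  · rintro ⟨y, hy, w, hw, rfl⟩
    obtain ⟨c, rfl⟩ := Ideal.mem_span_singleton'.1 hw
    exact ⟨c, by convert hy using 1; ring⟩
  · rintro ⟨c, hc⟩
    exact ⟨_, hc, z * c, Ideal.mem_span_singleton'.2 ⟨c, mul_comm _ _⟩, by ring⟩

lemma le_adj (q : Ideal R) (z : R) : q ≤ adj q z := le_sup_left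

lemma self_mem_adj (q : Ideal R) (z : R) : z ∈ adj q z :=
  Ideal.mem_sup_right (Ideal.mem_span_singleton_self z)

lemma adj_comm (q : Ideal R) (z w : R) : adj (adj q z) w = adj (adj q w) z := by
  rw [adj, adj, adj, adj, sup_assoc, sup_assoc, sup_comm (Ideal.span {z})]

/-- Regular sequences of length two can be swapped in this direction without finiteness
assumptions. -/
lemma NZ.swap {q : Ideal R} {z w : R} (hz : NZ q z) (hw : NZ (adj q z) w) : NZ (adj q w) z := by
  intro c hc
  obtain ⟨y, hy⟩ := mem_adj.1 hc
  have h1 : w * y ∈ adj q z := mem_adj.2 ⟨c, by simpa using q.neg_mem hy⟩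
  obtain ⟨y', hy'⟩ := mem_adj.1 (hw _ h1)
  refine mem_adj.2 ⟨y', hz _ ?_⟩
  have := q.add_mem hy (q.mul_mem_left w hy')
  convert this using 1
  ring

lemma NZ.pow {q : Ideal R} {z : R} (hz : NZ q z) (N : ℕ) : NZ q (z ^ N) := by
  induction N with
  | zero => intro c hc; simpa using hc
  | succ N ih =>
    intro c hc
    refine ih _ (hz _ ?_)
    convert hc using 1
    ring

variable (𝒜 : ℤ → Submodule K R) [GradedAlgebra 𝒜]

/-- The component of degree `i`. -/
def pr (i : ℤ) : R →ₗ[K] R := GradedAlgebra.proj 𝒜 i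

lemma pr_apply (i : ℤ) (a : R) : pr 𝒜 i a = (DirectSum.decompose 𝒜 a i : R) := rfl

lemma pr_mem (i : ℤ) (a : R) : pr 𝒜 i a ∈ 𝒜 i := SetLike.coe_mem _

variable {𝒜}

lemma pr_same {i : ℤ} {a : R} (h : a ∈ 𝒜 i) : pr 𝒜 i a = a :=
  DirectSum.decompose_of_mem_same 𝒜 h

lemma pr_ne {i j : ℤ} {a : R} (h : a ∈ 𝒜 i) (hij : i ≠ j) : pr 𝒜 j a = 0 :=
  DirectSum.decompose_of_mem_ne 𝒜 h hij

lemma pr_mul {δ : ℤ} {z : R} (hz : z ∈ 𝒜 δ) (i : ℤ) (a : R) :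
    pr 𝒜 (δ + i) (z * a) = z * pr 𝒜 i a :=
  DirectSum.coe_decompose_mul_add_of_left_mem 𝒜 hz

lemma pr_mul' {δ : ℤ} {z : R} (hz : z ∈ 𝒜 δ) (i : ℤ) (a : R) :
    pr 𝒜 i (z * a) = z * pr 𝒜 (i - δ) a := by
  rw [← pr_mul hz, add_sub_cancel]

lemma mem_of_pr_mem {q : Ideal R} {a : R} (h : ∀ i, pr 𝒜 i a ∈ q) : a ∈ q := by
  classical
  rw [← DirectSum.sum_support_decompose 𝒜 a]
  exact Ideal.sum_mem _ fun i _ => h i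

/-- An abbreviation for homogeneity in terms of `pr`. -/
lemma pr_mem_ideal {q : Ideal R} (hq : q.IsHomogeneous 𝒜) {a : R} (h : a ∈ q) (i : ℤ) :
    pr 𝒜 i a ∈ q := hq i h

lemma isHomogeneous_span_singleton {δ : ℤ} {z : R} (hz : z ∈ 𝒜 δ) :
    (Ideal.span {z}).IsHomogeneous 𝒜 :=
  Ideal.homogeneous_span 𝒜 _ (by rintro _ rfl; exact ⟨δ, hz⟩)

lemma isHomogeneous_adj {q : Ideal R} (hq : q.IsHomogeneous 𝒜) {δ : ℤ} {z : R} (hz : z ∈ 𝒜 δ) :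
    (adj q z).IsHomogeneous 𝒜 := hq.sup (isHomogeneous_span_singleton hz)

lemma isHomogeneous_colI {q : Ideal R} (hq : q.IsHomogeneous 𝒜) {δ : ℤ} {z : R} (hz : z ∈ 𝒜 δ) :
    (colI q z).IsHomogeneous 𝒜 := by
  intro i c hc
  rw [mem_colI]
  have := pr_mem_ideal hq (mem_colI.1 hc) (δ + i)
  rwa [pr_mul hz] at this

lemma mul_mem_deg {i j : ℤ} {a b : R} (ha : a ∈ 𝒜 i) (hb : b ∈ 𝒜 j) : a * b ∈ 𝒜 (i + j) :=
  SetLike.mul_mem_graded ha hb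

lemma pow_mem_deg {z : R} (hz : z ∈ 𝒜 1) (N : ℕ) : z ^ N ∈ 𝒜 (N : ℤ) := by
  have := SetLike.pow_mem_graded N hz
  simpa using this

/-! ### Prime avoidance over an infinite field -/

/-- Over an infinite field, a linear family of elements avoids finitely many ideals
simultaneously as soon as it avoids each of them. -/
lemma exists_avoid [Infinite K] {V : Type*} [AddCommGroup V] [Module K V] (g : V →ₗ[K] R)
    (s : Set (Ideal R)) (hs : s.Finite) (h : ∀ P ∈ s, ∃ v, g v ∉ P) :
    ∃ v, ∀ P ∈ s, g v ∉ P := by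
  have := hs.to_subtype
  by_contra hcon
  push Not at hcon
  obtain ⟨P, hP⟩ := Subspace.exists_eq_top_of_iUnion_eq_univ
    (p := fun P : s => ((P : Ideal R).restrictScalars K).comap g) (by
      refine Set.eq_univ_of_forall fun v => ?_
      obtain ⟨P, hP, hv⟩ := hcon v
      exact Set.mem_iUnion.2 ⟨⟨P, hP⟩, hv⟩)
  obtain ⟨v, hv⟩ := h P P.2
  have : v ∈ ((P : Ideal R).restrictScalars K).comap g := hP ▸ Submodule.mem_top
  exact hv this

/-- A linear family of elements over an infinite field contains an element that is a
nonzerodivisor modulo each of finitely many ideals `q` and avoids finitely many further ideals,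
provided that the whole family has no nonzero common annihilator in any `R ⧸ q`. -/
lemma exists_nz [Infinite K] [IsNoetherianRing R] {V : Type*} [AddCommGroup V] [Module K V]
    (g : V →ₗ[K] R) (Q : Set (Ideal R)) (hQ : Q.Finite)
    (h : ∀ q ∈ Q, ∀ c, (∀ v, g v * c ∈ q) → c ∈ q)
    (s : Set (Ideal R)) (hs : s.Finite) (hsv : ∀ P ∈ s, ∃ v, g v ∉ P) :
    ∃ v, (∀ q ∈ Q, NZ q (g v)) ∧ ∀ P ∈ s, g v ∉ P := by
  obtain ⟨v, hv⟩ := exists_avoid g (s ∪ ⋃ q ∈ Q, associatedPrimes R (R ⧸ q))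
    (hs.union (hQ.biUnion fun q _ => associatedPrimes.finite R (R ⧸ q))) (by
      rintro P (hP | hP)
      · exact hsv P hP
      simp only [Set.mem_iUnion] at hP
      obtain ⟨q, hq, hP⟩ := hP
      rw [AssociatedPrimes.mem_iff, isAssociatedPrime_iff] at hP
      obtain ⟨hp, y, rfl⟩ := hP
      obtain ⟨c, rfl⟩ := Ideal.Quotient.mk_surjective y
      by_contra! hcon
      have hc : c ∈ q := h q hq c fun v => by
        have := hcon v
        rw [Submodule.mem_colon_singleton, Submodule.mem_bot, Algebra.smul_def] at this
        rw [← Ideal.Quotient.eq_zero_iff_mem, map_mul]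
        exact this
      rw [Ideal.Quotient.eq_zero_iff_mem.2 hc] at hp
      exact hp.ne_top (by ext; simp))
  refine ⟨v, fun q hq c hc => ?_, fun P hP => hv P (Or.inl hP)⟩
  by_contra hcq
  have hmem : g v ∈ ⋃ p ∈ associatedPrimes R (R ⧸ q), (p : Set R) := by
    rw [biUnion_associatedPrimes_eq_zero_divisors]
    refine ⟨Ideal.Quotient.mk q c, fun h0 => hcq (Ideal.Quotient.eq_zero_iff_mem.1 h0), ?_⟩
    rw [Algebra.smul_def]
    show Ideal.Quotient.mk q (g v) * _ = 0
    rw [← map_mul]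
    exact Ideal.Quotient.eq_zero_iff_mem.2 hc
  simp only [Set.mem_iUnion] at hmem
  obtain ⟨P, hP, hmem⟩ := hmem
  exact hv P (Or.inr (Set.mem_biUnion hq hP)) hmem

/-! ### Regular sequences with one-dimensional socle -/

variable {n : ℕ} (x : Fin n → R)

/-- No nonzero element of `R ⧸ q` is killed by all the `x i`. -/
def SocZ (q : Ideal R) : Prop := ∀ c, (∀ i, x i * c ∈ q) → c ∈ q

variable (𝒜)

/-- `GorT 𝒜 x r q s`: there is a homogeneous `R ⧸ q`-regular sequence `z₁, …, z_r` in the ideal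
`(x)` such that the socle of `R ⧸ (q, z₁, …, z_r)` is one-dimensional, spanned by an element of
degree `s + deg z₁ + ⋯ + deg z_r`. In particular `R ⧸ q` has depth `r`. -/
def GorT : ℕ → Ideal R → ℤ → Prop
  | 0, q, s => ∃ σ ∈ 𝒜 s, σ ∉ q ∧ (∀ i, x i * σ ∈ q) ∧
      ∀ c, (∀ i, x i * c ∈ q) → ∃ α : K, c - α • σ ∈ q
  | r + 1, q, s => ∃ δ : ℤ, ∃ z ∈ 𝒜 δ, z ∈ Ideal.span (Set.range x) ∧ NZ q z ∧
      GorT r (adj q z) (s + δ)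

variable {𝒜 x}

lemma mul_mem_of_socle {q : Ideal R} {c z : R} (hz : z ∈ Ideal.span (Set.range x))
    (h : ∀ i, x i * c ∈ q) : z * c ∈ q := by
  have : Ideal.span (Set.range x) ≤ colI q c := by
    rw [Ideal.span_le]
    rintro _ ⟨i, rfl⟩
    show c * x i ∈ q
    rw [mul_comm]
    exact h i
  rw [mul_comm]
  exact this hz

lemma GorT.socZ {r : ℕ} {q : Ideal R} {s : ℤ} (h : GorT 𝒜 x (r + 1) q s) : SocZ x q := by
  obtain ⟨δ, z, -, hzm, hz, -⟩ := h
  exact fun c hc => hz c (mul_mem_of_socle hzm hc)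

lemma GorT.ne_top {r : ℕ} : ∀ {q : Ideal R} {s : ℤ}, GorT 𝒜 x r q s → q ≠ ⊤ := by
  induction r with
  | zero =>
    rintro q s ⟨σ, -, hσ, -⟩ rfl
    exact hσ trivial
  | succ r ih =>
    rintro q s ⟨δ, z, -, -, -, h⟩ rfl
    exact ih h (top_le_iff.1 (le_adj _ _))

/-- The correspondence between socle elements modulo `ℓ` and modulo `z`. -/
lemma exchange {q : Ideal R} {z l c : R} (hl : NZ q l)
    (hzm : z ∈ Ideal.span (Set.range x)) (hc : ∀ i, x i * c ∈ adj q l) :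
    ∃ c', z * c - l * c' ∈ q ∧ ∀ i, x i * c' ∈ adj q z := by
  obtain ⟨c', hc'⟩ := mem_adj.1 (mul_mem_of_socle hzm hc)
  refine ⟨c', hc', fun i => ?_⟩
  obtain ⟨t, ht⟩ := mem_adj.1 (hc i)
  refine mem_adj.2 ⟨t, hl _ ?_⟩
  have := q.sub_mem (q.mul_mem_left z ht) (q.mul_mem_left (x i) hc')
  convert this using 1
  ring

lemma exchange_mem {q : Ideal R} {z l c c' : R} (hz : NZ q z)
    (h : z * c - l * c' ∈ q) (hc' : c' ∈ adj q z) : c ∈ adj q l := by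
  obtain ⟨y, hy⟩ := mem_adj.1 hc'
  refine mem_adj.2 ⟨y, hz _ ?_⟩
  have := q.add_mem h (q.mul_mem_left l hy)
  convert this using 1
  ring

lemma SocZ.exchange {q : Ideal R} {z l : R} (hz : NZ q z) (hl : NZ q l)
    (hzm : z ∈ Ideal.span (Set.range x)) (h : SocZ x (adj q z)) : SocZ x (adj q l) := by
  intro c hc
  obtain ⟨c', h1, h2⟩ := _root_.exchange hl hzm hc
  exact exchange_mem hz h1 (h c' h2)

/-- Independence of the choice of regular sequence: if `R ⧸ q` has depth `r + 1` with
one-dimensional socle modulo some maximal regular sequence, then the same holds, with the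
expected degree, starting from an arbitrary homogeneous nonzerodivisor `l`. -/
lemma GorT.step [Infinite K] [IsNoetherianRing R] (hx : ∀ i, x i ∈ 𝒜 1) (r : ℕ) :
    ∀ {q : Ideal R} {s : ℤ}, q.IsHomogeneous 𝒜 → GorT 𝒜 x (r + 1) q s →
    ∀ {δ : ℤ} {l : R}, l ∈ 𝒜 δ → l ∈ Ideal.span (Set.range x) → NZ q l →
      GorT 𝒜 x r (adj q l) (s + δ) := by
  induction r with
  | zero =>
    rintro q s hq ⟨δ', z, hzd, hzm, hz, σ, hσd, hσ, hσm, hsoc⟩ δ l hld hlm hl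
    obtain ⟨τ, hτ, hτm⟩ := exchange hz hlm hσm
    -- the component of `τ` in the expected degree
    have hτ' : l * σ - z * pr 𝒜 (s + δ) τ ∈ q := by
      have := pr_mem_ideal hq hτ (δ + (s + δ'))
      rw [map_sub, pr_mul hld, pr_same hσd, show δ + (s + δ') = δ' + (s + δ) by ring,
        pr_mul hzd] at this
      exact this
    refine ⟨pr 𝒜 (s + δ) τ, pr_mem _ _ _, fun h => hσ (exchange_mem hl hτ' h), fun i => ?_, ?_⟩
    · rw [← pr_mul (hx i)]
      exact pr_mem_ideal (isHomogeneous_adj hq hld) (hτm i) _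
    · intro c hc
      obtain ⟨c', h1, h2⟩ := exchange hl hzm hc
      obtain ⟨α, hα⟩ := hsoc c' h2
      refine ⟨α, exchange_mem (c' := c' - α • σ) hz ?_ hα⟩
      have h3 : α • (l * σ - z * pr 𝒜 (s + δ) τ) ∈ q :=
        Submodule.smul_of_tower_mem q α hτ'
      have := q.add_mem h1 h3
      convert this using 1
      simp only [mul_sub, smul_sub, mul_smul_comm]
      ring
  | succ r ih =>
    rintro q s hq ⟨δ', z, hzd, hzm, hz, hT⟩ δ l hld hlm hl
    have hs1 : SocZ x (adj q z) := hT.socZ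
    have hs2 : SocZ x (adj q l) := hs1.exchange hz hl hzm
    have hg : ∀ i, Fintype.linearCombination K x (Pi.single i 1) = x i := fun i => by
      classical
      simp
    obtain ⟨v, hv, -⟩ := exists_nz (Fintype.linearCombination K x) {adj q z, adj q l}
      (Set.toFinite _) (by
        rintro p (rfl | rfl) c hc
        · exact hs1 c fun i => by simpa only [hg] using hc (Pi.single i 1)
        · exact hs2 c fun i => by simpa only [hg] using hc (Pi.single i 1))
      ∅ Set.finite_empty (by simp)
    set w := Fintype.linearCombination K x v with hw
    have hwd : w ∈ 𝒜 1 := by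
      rw [hw, Fintype.linearCombination_apply]
      exact Submodule.sum_mem _ fun i _ => Submodule.smul_mem _ _ (hx i)
    have hwm : w ∈ Ideal.span (Set.range x) := by
      rw [hw, Fintype.linearCombination_apply]
      exact Submodule.sum_mem _ fun i _ =>
        Submodule.smul_of_tower_mem _ _ (Ideal.subset_span ⟨i, rfl⟩)
    have hwz : NZ (adj q z) w := hv _ (by simp)
    have hwl : NZ (adj q l) w := hv _ (by simp)
    have h1 := ih (isHomogeneous_adj hq hzd) hT hwd hwm hwz
    rw [adj_comm] at h1
    have h2 : GorT 𝒜 x (r + 1) (adj q w) (s + 1) :=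
      ⟨δ', z, hzd, hzm, hz.swap hwz, by convert h1 using 1; ring⟩
    have h3 := ih (isHomogeneous_adj hq hwd) h2 hld hlm (hl.swap hwl)
    rw [adj_comm] at h3
    exact ⟨1, w, hwd, hwm, hwl, by convert h3 using 1; ring⟩

end Graded

/-! ### Depth and colon ideals -/

section Graded2

variable {K R : Type*} [Field K] [CommRing R] [Algebra K R]
variable {𝒜 : ℤ → Submodule K R} [GradedAlgebra 𝒜] {n : ℕ} {x : Fin n → R}

lemma SocZ.pow {q : Ideal R} (h : SocZ x q) (N : ℕ) : ∀ c,
    (∀ g ∈ Ideal.span (Set.range x) ^ N, g * c ∈ q) → c ∈ q := by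
  induction N with
  | zero => intro c hc; simpa using hc 1 (by simp)
  | succ N ih =>
    refine fun c hc => ih c fun g hg => h _ fun i => ?_
    have := hc (g * x i) (by
      rw [pow_succ]; exact Ideal.mul_mem_mul hg (Ideal.subset_span ⟨i, rfl⟩))
    convert this using 1
    ring

/-- Grade of `I` versus dimension: if `R ⧸ q` has depth at least two and `I + (l)` is primary to
the irrelevant ideal for a linear form `l` regular modulo `q` (so `dim R ⧸ I ≤ 1`), then `I` kills
no nonzero element of `R ⧸ q`. A nonzero element of least degree killed by `I` would survive
modulo `l` and be killed there by a power of the irrelevant ideal. -/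
lemma GorT.colon_eq [Infinite K] [IsNoetherianRing R] (hneg : ∀ i < 0, 𝒜 i = ⊥)
    (hx : ∀ i, x i ∈ 𝒜 1) {r : ℕ} {q : Ideal R} {s : ℤ} (hq : q.IsHomogeneous 𝒜)
    (hT : GorT 𝒜 x (r + 2) q s) {I : Ideal R} (hI : I.IsHomogeneous 𝒜) {l : R} (hld : l ∈ 𝒜 1)
    (hlm : l ∈ Ideal.span (Set.range x)) (hl : NZ q l) {N : ℕ}
    (hN : Ideal.span (Set.range x) ^ N ≤ adj I l) (c : R) (hc : ∀ a ∈ I, a * c ∈ q) : c ∈ q := by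
  have hs : SocZ x (adj q l) := (GorT.step hx _ hq hT hld hlm hl).socZ
  have key : ∀ t : ℕ, ∀ i : ℤ, i < t → ∀ c ∈ 𝒜 i, (∀ a ∈ I, a * c ∈ q) → c ∈ q := by
    intro t
    induction t with
    | zero =>
      intro i hi c hc _
      rw [hneg i (by simpa using hi), Submodule.mem_bot] at hc
      rw [hc]; exact q.zero_mem
    | succ t ih =>
      intro i hi c hcd hc
      have h1 : c ∈ adj q l := by
        refine hs.pow N c fun g hg => ?_
        obtain ⟨b, hb⟩ := mem_adj.1 (hN hg)
        refine mem_adj.2 ⟨b * c, ?_⟩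
        convert hc _ hb using 1
        ring
      obtain ⟨y, hy⟩ := mem_adj.1 h1
      have hy' := pr_mem_ideal hq hy i
      rw [map_sub, pr_same hcd, pr_mul' hld] at hy'
      have h2 : pr 𝒜 (i - 1) y ∈ q := by
        refine ih (i - 1) (by push_cast at hi; omega) _ (pr_mem _ _ _) fun a ha => hl _ ?_
        have := q.sub_mem (hc a ha) (q.mul_mem_left a hy')
        convert this using 1
        ring
      have := q.add_mem hy' (q.mul_mem_left l h2)
      simpa using this
  refine mem_of_pr_mem (𝒜 := 𝒜) fun i => key (i.toNat + 1) i (by omega) _ (pr_mem _ _ _) ?_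
  intro a ha
  refine mem_of_pr_mem (𝒜 := 𝒜) fun j => ?_
  -- reduce to homogeneous `a` by summing over its components
  classical
  rw [← DirectSum.sum_support_decompose 𝒜 a, Finset.sum_mul, map_sum]
  refine Ideal.sum_mem _ fun k _ => ?_
  have hk : ((DirectSum.decompose 𝒜 a) k : R) ∈ 𝒜 k := SetLike.coe_mem _
  by_cases hj : k + i = j
  · subst hj
    rw [pr_same (mul_mem_deg hk (pr_mem 𝒜 i c)), ← pr_mul hk]
    exact pr_mem_ideal hq (hc _ (hI k ha)) _
  · rw [pr_ne (mul_mem_deg hk (pr_mem 𝒜 i c)) hj]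
    exact q.zero_mem

/-! ### Hilbert functions -/

variable (𝒜) in
/-- The dimension of the degree `i` piece of the ideal `q`. -/
def gd (q : Ideal R) (i : ℤ) : ℤ :=
  Module.finrank K ((q.restrictScalars K ⊓ 𝒜 i : Submodule K R))

variable (𝒜) in
/-- The Hilbert function of `R ⧸ q`. -/
def hilb (q : Ideal R) : ℤ → ℤ := fun i => gd 𝒜 ⊤ i - gd 𝒜 q i

lemma gd_le_gd [∀ i, FiniteDimensional K (𝒜 i)] {p q : Ideal R} {i : ℤ}
    (h : ∀ a ∈ 𝒜 i, a ∈ p → a ∈ q) : gd 𝒜 p i ≤ gd 𝒜 q i := by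
  have : FiniteDimensional K (q.restrictScalars K ⊓ 𝒜 i : Submodule K R) :=
    Submodule.finiteDimensional_of_le inf_le_right
  exact Int.ofNat_le.2 (Submodule.finrank_mono fun a ha => ⟨h a ha.2 ha.1, ha.2⟩)

lemma gd_congr [∀ i, FiniteDimensional K (𝒜 i)] {p q : Ideal R} {i : ℤ}
    (h : ∀ a ∈ 𝒜 i, a ∈ p ↔ a ∈ q) : gd 𝒜 p i = gd 𝒜 q i :=
  le_antisymm (gd_le_gd fun a ha => (h a ha).1) (gd_le_gd fun a ha => (h a ha).2)

variable (𝒜) in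
/-- The space `z P_i + Q_j`. -/
def zsum (z : R) (P Q : Ideal R) (i j : ℤ) : Submodule K R :=
  (P.restrictScalars K ⊓ 𝒜 i).map (LinearMap.mulLeft K z) ⊔ (Q.restrictScalars K ⊓ 𝒜 j)

lemma finrank_zsum [IsDomain R] [∀ i, FiniteDimensional K (𝒜 i)] {z : R} {δ : ℤ} (hz : z ∈ 𝒜 δ)
    (hz0 : z ≠ 0) (P Q : Ideal R) (i j : ℤ) (hj : j = δ + i) :
    (Module.finrank K (zsum 𝒜 z P Q i j) : ℤ) + gd 𝒜 (P ⊓ colI Q z) i =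
      gd 𝒜 P i + gd 𝒜 Q j := by
  subst hj
  have inj : Function.Injective (LinearMap.mulLeft K z) := fun a b h =>
    mul_left_cancel₀ hz0 h
  have f1 : FiniteDimensional K (P.restrictScalars K ⊓ 𝒜 i : Submodule K R) :=
    Submodule.finiteDimensional_of_le inf_le_right
  have f2 : FiniteDimensional K (Q.restrictScalars K ⊓ 𝒜 (δ + i) : Submodule K R) :=
    Submodule.finiteDimensional_of_le inf_le_right
  have h := Submodule.finrank_sup_add_finrank_inf_eq
    ((P.restrictScalars K ⊓ 𝒜 i).map (LinearMap.mulLeft K z))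
    (Q.restrictScalars K ⊓ 𝒜 (δ + i))
  have h2 : (P.restrictScalars K ⊓ 𝒜 i).map (LinearMap.mulLeft K z) ⊓
      (Q.restrictScalars K ⊓ 𝒜 (δ + i)) =
      ((P ⊓ colI Q z).restrictScalars K ⊓ 𝒜 i).map (LinearMap.mulLeft K z) := by
    ext a
    constructor
    · rintro ⟨⟨b, ⟨hb1, hb2⟩, rfl⟩, ha, -⟩
      exact ⟨b, ⟨⟨hb1, ha⟩, hb2⟩, rfl⟩
    · rintro ⟨b, ⟨⟨hb1, hb3⟩, hb2⟩, rfl⟩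
      exact ⟨⟨b, ⟨hb1, hb2⟩, rfl⟩, hb3, mul_mem_deg hz hb2⟩
  rw [h2, ← LinearEquiv.finrank_eq (Submodule.equivMapOfInjective _ inj _),
    ← LinearEquiv.finrank_eq (Submodule.equivMapOfInjective _ inj _)] at h
  unfold gd zsum
  exact_mod_cast h

lemma gd_adj [IsDomain R] [∀ i, FiniteDimensional K (𝒜 i)] {z : R} {δ : ℤ} (hz : z ∈ 𝒜 δ)
    (hz0 : z ≠ 0) {q : Ideal R} (hq : q.IsHomogeneous 𝒜) (j : ℤ) :
    gd 𝒜 (adj q z) j + gd 𝒜 (colI q z) (j - δ) = gd 𝒜 q j + gd 𝒜 ⊤ (j - δ) := by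
  have h := finrank_zsum hz hz0 ⊤ q (j - δ) j (by ring)
  have h2 : zsum 𝒜 z ⊤ q (j - δ) j = (adj q z).restrictScalars K ⊓ 𝒜 j := by
    apply le_antisymm
    · refine sup_le ?_ ?_
      · rintro _ ⟨b, ⟨-, hb⟩, rfl⟩
        refine ⟨Ideal.mul_mem_right _ _ (self_mem_adj q z), ?_⟩
        have := mul_mem_deg hz hb
        rwa [add_sub_cancel] at this
      · rintro a ⟨h1, h2⟩
        exact ⟨le_adj q z h1, h2⟩
    · rintro a ⟨h1, h2⟩
      obtain ⟨c, hc⟩ := mem_adj.1 (show a ∈ adj q z from h1)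
      have hc' := pr_mem_ideal hq hc j
      rw [map_sub, pr_same h2, pr_mul' hz] at hc'
      have hd : z * pr 𝒜 (j - δ) c ∈ 𝒜 j := by
        have := mul_mem_deg hz (pr_mem 𝒜 (j - δ) c)
        rwa [add_sub_cancel] at this
      refine Submodule.mem_sup.2 ⟨z * pr 𝒜 (j - δ) c, ⟨_, ⟨trivial, pr_mem _ _ _⟩, rfl⟩,
        a - z * pr 𝒜 (j - δ) c, ⟨hc', Submodule.sub_mem _ h2 hd⟩, by ring⟩
  rw [h2, top_inf_eq] at h
  unfold gd at h ⊢
  linarith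

lemma hilb_adj [IsDomain R] [∀ i, FiniteDimensional K (𝒜 i)] {z : R} {δ : ℤ} (hz : z ∈ 𝒜 δ)
    (hz0 : z ≠ 0) {q : Ideal R} (hq : q.IsHomogeneous 𝒜) (h : NZ q z) :
    hilb 𝒜 (adj q z) = dOp δ (hilb 𝒜 q) := by
  funext j
  have h1 := gd_adj hz hz0 hq j
  have h2 : gd 𝒜 (colI q z) (j - δ) = gd 𝒜 q (j - δ) :=
    gd_congr fun a _ => ⟨fun ha => h a ha, fun ha => q.mul_mem_left z ha⟩
  simp only [dOp_apply, hilb]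
  linarith

/-! ### Duality in graded Artinian rings with one-dimensional socle -/

/-- A nonzero homogeneous element of a graded Artinian ring with simple socle divides the socle
generator up to a nonzero scalar. -/
lemma GorT.exists_mul {a : Ideal R} (ha : a.IsHomogeneous 𝒜) {s : ℤ} {σ : R} (hσd : σ ∈ 𝒜 s)
    (hsoc : ∀ c, (∀ i, x i * c ∈ a) → ∃ α : K, c - α • σ ∈ a)
    {M : ℕ} (hM : Ideal.span (Set.range x) ^ M ≤ a) {i : ℤ} {b : R} (hb : b ∈ 𝒜 i) (hba : b ∉ a) :
    ∃ w ∈ 𝒜 (s - i), ∃ α : K, α ≠ 0 ∧ b * w - α • σ ∈ a := by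
  classical
  -- the last power of the irrelevant ideal not killing `b`
  have hex : ∃ N, ∀ g ∈ Ideal.span (Set.range x) ^ N, g * b ∈ a :=
    ⟨M, fun g hg => a.mul_mem_right b (hM hg)⟩
  have h0 : Nat.find hex ≠ 0 := by
    intro h
    have := Nat.find_spec hex
    rw [h] at this
    exact hba (by simpa using this 1 (by simp))
  obtain ⟨N, hN⟩ := Nat.exists_eq_succ_of_ne_zero h0
  have h1 := Nat.find_min hex (m := N) (by omega)
  push Not at h1
  obtain ⟨g, hg, hgb⟩ := h1
  obtain ⟨α, hα⟩ := hsoc (g * b) fun i => by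
    have := Nat.find_spec hex (g * x i) (by
      rw [hN, Nat.succ_eq_add_one, pow_succ]
      exact Ideal.mul_mem_mul hg (Ideal.subset_span ⟨i, rfl⟩))
    convert this using 1
    ring
  have hα0 : α ≠ 0 := by
    rintro rfl
    exact hgb (by simpa using hα)
  refine ⟨pr 𝒜 (s - i) g, pr_mem _ _ _, α, hα0, ?_⟩
  have := pr_mem_ideal ha hα s
  rwa [map_sub, map_smul, pr_same hσd, mul_comm, pr_mul' hb] at this

/-- In a graded Artinian Gorenstein ring `R ⧸ a` with socle in degree `s`, a homogeneous element
of degree `j` outside a homogeneous ideal `J` is detected by an element of degree `s - j` in the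
annihilator of `J`. -/
lemma GorT.dual [∀ i, FiniteDimensional K (𝒜 i)] {a : Ideal R} (ha : a.IsHomogeneous 𝒜) {s : ℤ}
    (hT : GorT 𝒜 x 0 a s) {M : ℕ} (hM : Ideal.span (Set.range x) ^ M ≤ a)
    {J : Ideal R} (hJ : J.IsHomogeneous 𝒜) (haJ : a ≤ J) {j : ℤ} {u : R} (hu : u ∈ 𝒜 j)
    (huJ : u ∉ J) :
    ∃ w ∈ 𝒜 (s - j), (∀ b ∈ J, b * w ∈ a) ∧ u * w ∉ a := by
  obtain ⟨σ, hσd, hσ, -, hsoc⟩ := hT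
  obtain ⟨lam, hlσ, hla⟩ := Submodule.exists_le_ker_of_notMem (p := a.restrictScalars K) hσ
  have hlam : ∀ c α, c - α • σ ∈ a → lam c = α * lam σ := by
    intro c α h
    have : lam (c - α • σ) = 0 := hla h
    rw [map_sub, map_smul, sub_eq_zero] at this
    simpa using this
  obtain ⟨φ, hφu, hφJ⟩ := Submodule.exists_le_ker_of_notMem (p := J.restrictScalars K) huJ
  -- the pairing `(w, b) ↦ lam (w * b)` between the pieces of degree `s - j` and `j`
  let L : 𝒜 (s - j) →ₗ[K] Module.Dual K (𝒜 j) :=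
    ((LinearMap.mul K R).domRestrict₁₂ (𝒜 (s - j)) (𝒜 j)).compr₂ lam
  have hL : ∀ w b, L w b = lam ((w : R) * b) := fun _ _ => rfl
  have hmem : φ.comp (𝒜 j).subtype ∈ LinearMap.range L := by
    rw [← Subspace.dualCoannihilator_dualAnnihilator_eq (W := LinearMap.range L),
      Submodule.mem_dualAnnihilator]
    intro b hb
    rw [Submodule.mem_dualCoannihilator] at hb
    have hba : (b : R) ∈ a := by
      by_contra hba
      obtain ⟨w, hw, α, hα, h⟩ := GorT.exists_mul ha hσd hsoc hM b.2 hba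
      have h1 := hb _ ⟨⟨w, hw⟩, rfl⟩
      rw [hL, mul_comm, hlam _ α h] at h1
      exact mul_ne_zero hα hlσ h1
    exact hφJ (haJ hba)
  obtain ⟨w, hw⟩ := hmem
  have hw' : ∀ b ∈ 𝒜 j, lam (b * w) = φ b := fun b hb => by
    have := LinearMap.congr_fun hw ⟨b, hb⟩
    rw [hL] at this
    rw [mul_comm]
    exact this
  refine ⟨w, w.2, ?_, fun h => hφu ?_⟩
  · have hom : ∀ i, ∀ b ∈ 𝒜 i, b ∈ J → b * w ∈ a := by
      intro i b hb hbJ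
      by_contra hbw
      obtain ⟨c, hc, α, hα, h⟩ := GorT.exists_mul ha hσd hsoc hM (mul_mem_deg hb w.2) hbw
      have hbc : b * c ∈ 𝒜 j := by
        have := mul_mem_deg hb hc
        convert this using 2
        ring
      have h1 := hw' _ hbc
      rw [show b * c * (w : R) = b * w * c by ring, hlam _ α h,
        (hφJ (J.mul_mem_right c hbJ) : φ (b * c) = 0)] at h1
      exact mul_ne_zero hα hlσ h1
    intro b hb
    classical
    rw [← DirectSum.sum_support_decompose 𝒜 b, Finset.sum_mul]
    exact Ideal.sum_mem _ fun i _ => hom i _ (SetLike.coe_mem _) (hJ i hb)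
  · rw [← hw' u hu]
    exact hla h

end Graded2

/-! ### Koszul boundaries -/

section Koszul

open Matrix

variable {R : Type*} [CommRing R] {ι κ α β : Type*}

/-- The module of Koszul boundaries of a family `g`, spanned by all
`g i • e j - g j • e i`. -/
def kB [DecidableEq ι] (g : ι → R) : Submodule R (ι → R) :=
  Submodule.span R {v | ∃ i j, v = Pi.single j (g i) - Pi.single i (g j)}

/-- The Koszul complex of `g` is exact at its first spot: every syzygy is a Koszul boundary. -/
def KReg [DecidableEq ι] [Fintype ι] (g : ι → R) : Prop := ∀ a, a ⬝ᵥ g = 0 → a ∈ kB g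

variable [DecidableEq ι] [Fintype ι] [DecidableEq κ] [Fintype κ]
  [DecidableEq α] [Fintype α] [DecidableEq β] [Fintype β]

lemma kB_mem (g u w : ι → R) : (u ⬝ᵥ g) • w - (w ⬝ᵥ g) • u ∈ kB g := by
  have : (u ⬝ᵥ g) • w - (w ⬝ᵥ g) • u =
      ∑ i, ∑ j, (u i * w j) • (Pi.single j (g i) - Pi.single i (g j) : ι → R) := by
    funext l
    simp only [Finset.sum_apply, Pi.smul_apply, Pi.sub_apply, smul_eq_mul, mul_sub,
      Finset.sum_sub_distrib, dotProduct, Finset.sum_mul]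
    congr 1
    · refine Finset.sum_congr rfl fun i _ => ?_
      rw [Finset.sum_eq_single l]
      · simp; ring
      · intro j _ hj
        simp [hj.symm]
      · simp
    · rw [Finset.sum_comm]
      refine Finset.sum_congr rfl fun i _ => ?_
      rw [Finset.sum_eq_single l]
      · simp; ring
      · intro j _ hj
        simp [hj.symm]
      · simp
  rw [this]
  exact Submodule.sum_mem _ fun i _ => Submodule.sum_mem _ fun j _ =>
    Submodule.smul_mem _ _ (Submodule.subset_span ⟨i, j, rfl⟩)

lemma kB_vecMul (f : ι → R) (M : Matrix κ ι R) {a : κ → R} (ha : a ∈ kB (M *ᵥ f)) :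
    a ᵥ* M ∈ kB f := by
  have : kB (M *ᵥ f) ≤ (kB f).comap M.vecMulLinear := by
    refine Submodule.span_le.2 ?_
    rintro _ ⟨i, j, rfl⟩
    show (Pi.single j ((M *ᵥ f) i) - Pi.single i ((M *ᵥ f) j)) ᵥ* M ∈ kB f
    have h := kB_mem f (M i) (M j)
    convert h using 1
    rw [sub_vecMul, single_vecMul, single_vecMul]
    rfl
  exact this ha

lemma kB_dot {g a : ι → R} (ha : a ∈ kB g) : a ⬝ᵥ g = 0 := by
  induction ha using Submodule.span_induction with
  | mem v hv =>
    obtain ⟨i, j, rfl⟩ := hv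
    rw [sub_dotProduct, single_dotProduct, single_dotProduct, mul_comm, sub_self]
  | zero => exact zero_dotProduct _
  | add v w _ _ h1 h2 => rw [add_dotProduct, h1, h2, add_zero]
  | smul c v _ h => rw [smul_dotProduct, h, smul_zero]

omit [DecidableEq ι] in
lemma mem_span_dot {g : ι → R} {b : R} :
    b ∈ Ideal.span (Set.range g) ↔ ∃ u : ι → R, u ⬝ᵥ g = b :=
  Ideal.mem_span_range_iff_exists_fun

omit [DecidableEq ι] in
lemma dot_mem_span (u g : ι → R) : u ⬝ᵥ g ∈ Ideal.span (Set.range g) := mem_span_dot.2 ⟨u, rfl⟩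

/-- The ideal generated by `g` kills the first Koszul homology. -/
lemma smul_mem_kB {g a : ι → R} (ha : a ⬝ᵥ g = 0) {b : R} (hb : b ∈ Ideal.span (Set.range g)) :
    b • a ∈ kB g := by
  obtain ⟨u, rfl⟩ := mem_span_dot.1 hb
  simpa [ha] using kB_mem g u a

lemma kB_extend {g : α ⊕ β → R} {a : α → R} (ha : a ∈ kB (g ∘ Sum.inl)) :
    Sum.elim a (0 : β → R) ∈ kB g := by
  have h : (fromCols (1 : Matrix α α R) (0 : Matrix α β R)) *ᵥ g = g ∘ Sum.inl := by
    rw [fromCols_mulVec]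
    simp
  have := kB_vecMul g (fromCols (1 : Matrix α α R) (0 : Matrix α β R)) (a := a) (by rwa [h])
  rw [vecMul_fromCols] at this
  simpa using this

omit [DecidableEq α] [DecidableEq β] in
lemma dot_sum (a g : α ⊕ β → R) :
    a ⬝ᵥ g = (a ∘ Sum.inl) ⬝ᵥ (g ∘ Sum.inl) + (a ∘ Sum.inr) ⬝ᵥ (g ∘ Sum.inr) := by
  simp [dotProduct, Fintype.sum_sum_type]

/-- If the first part of `g` is Koszul-regular, a syzygy of `g` is a boundary as soon as its
remaining coefficients lie in the ideal generated by the first part. -/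
lemma kB_of_inr {g : α ⊕ β → R} (hg : KReg (g ∘ Sum.inl)) {a : α ⊕ β → R} (ha : a ⬝ᵥ g = 0)
    (h : ∀ b, a (Sum.inr b) ∈ Ideal.span (Set.range (g ∘ Sum.inl))) : a ∈ kB g := by
  choose u hu using fun b => mem_span_dot.1 (h b)
  let U : β → α ⊕ β → R := fun b => Sum.elim (u b) 0
  have hU : ∀ b, U b ⬝ᵥ g = a (Sum.inr b) := fun b => by
    rw [dot_sum, ← hu b]
    simp [U]
  let T : α ⊕ β → R := ∑ b, ((U b ⬝ᵥ g) • Pi.single (Sum.inr b) 1 -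
    ((Pi.single (Sum.inr b) 1 : α ⊕ β → R) ⬝ᵥ g) • U b)
  have hT : T ∈ kB g := Submodule.sum_mem _ fun b _ => kB_mem g _ _
  have hsub : (a - T) ∘ Sum.inr = 0 := by
    funext b
    simp only [T, hU, Function.comp_apply, Pi.sub_apply, Finset.sum_apply, Pi.smul_apply,
      smul_eq_mul, Pi.zero_apply]
    rw [Finset.sum_eq_single b]
    · simp [U]
    · intro j _ hj
      simp [U, hj.symm]
    · simp
  have hdot : ((a - T) ∘ Sum.inl) ⬝ᵥ (g ∘ Sum.inl) = 0 := by
    have h1 : (a - T) ⬝ᵥ g = 0 := by rw [sub_dotProduct, ha, kB_dot hT, sub_zero]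
    rw [dot_sum, hsub] at h1
    simpa using h1
  have h2 := kB_extend (β := β) (g := g) (hg _ hdot)
  have h3 : Sum.elim ((a - T) ∘ Sum.inl) (0 : β → R) = a - T := by
    rw [← hsub, Sum.elim_comp_inl_inr]
  rw [h3] at h2
  have := (kB g).add_mem h2 hT
  simpa using this

lemma KReg.extend {g : α ⊕ Unit → R} (hg : KReg (g ∘ Sum.inl))
    (hz : NZ (Ideal.span (Set.range (g ∘ Sum.inl))) (g (Sum.inr ()))) : KReg g := by
  refine fun a ha => kB_of_inr hg ha fun b => hz _ ?_
  rw [dot_sum] at ha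
  have : g (Sum.inr ()) * a (Sum.inr ()) = (-(a ∘ Sum.inl)) ⬝ᵥ (g ∘ Sum.inl) := by
    rw [neg_dotProduct]
    simp only [dotProduct, Function.comp_apply, Finset.univ_unique, Finset.sum_singleton] at ha ⊢
    linear_combination ha
  cases b
  rw [this]
  exact dot_mem_span _ _

/-- The last two coefficients of a Koszul boundary come from a boundary of the last two
generators, modulo the ideal generated by the first part. -/
lemma kB_proj {g : α ⊕ Fin 2 → R} {a : α ⊕ Fin 2 → R} (ha : a ∈ kB g) :
    ∃ y, a (Sum.inr 1) - y * g (Sum.inr 0) ∈ Ideal.span (Set.range (g ∘ Sum.inl)) ∧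
      a (Sum.inr 0) + y * g (Sum.inr 1) ∈ Ideal.span (Set.range (g ∘ Sum.inl)) := by
  have hm : ∀ i, g (Sum.inl i) ∈ Ideal.span (Set.range (g ∘ Sum.inl)) := fun i =>
    Ideal.subset_span ⟨i, rfl⟩
  induction ha using Submodule.span_induction with
  | mem v hv =>
    obtain ⟨i, j, rfl⟩ := hv
    rcases i with i | i <;> rcases j with j | j
    · exact ⟨0, by simp⟩
    · refine ⟨0, ?_⟩
      fin_cases j <;> simp [hm i]
    · refine ⟨0, ?_⟩
      fin_cases i <;> simp [hm j]
    · fin_cases i <;> fin_cases j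
      · exact ⟨0, by simp⟩
      · exact ⟨1, by simp⟩
      · exact ⟨-1, by simp⟩
      · exact ⟨0, by simp⟩
  | zero => exact ⟨0, by simp⟩
  | add v w _ _ hv hw =>
    obtain ⟨y, h1, h2⟩ := hv
    obtain ⟨y', h3, h4⟩ := hw
    refine ⟨y + y', ?_, ?_⟩
    · convert Ideal.add_mem _ h1 h3 using 1
      simp only [Pi.add_apply]; ring
    · convert Ideal.add_mem _ h2 h4 using 1
      simp only [Pi.add_apply]; ring
  | smul c v _ h =>
    obtain ⟨y, h1, h2⟩ := h
    refine ⟨c * y, ?_, ?_⟩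
    · convert Ideal.mul_mem_left _ c h1 using 1
      simp only [Pi.smul_apply, smul_eq_mul]; ring
    · convert Ideal.mul_mem_left _ c h2 using 1
      simp only [Pi.smul_apply, smul_eq_mul]; ring

lemma kB_of_proj {g : α ⊕ Fin 2 → R} (hg : KReg (g ∘ Sum.inl)) {a : α ⊕ Fin 2 → R}
    (ha : a ⬝ᵥ g = 0) {y : R}
    (h1 : a (Sum.inr 1) - y * g (Sum.inr 0) ∈ Ideal.span (Set.range (g ∘ Sum.inl)))
    (h0 : a (Sum.inr 0) + y * g (Sum.inr 1) ∈ Ideal.span (Set.range (g ∘ Sum.inl))) :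
    a ∈ kB g := by
  have hT : y • (Pi.single (Sum.inr 1) (g (Sum.inr 0)) - Pi.single (Sum.inr 0) (g (Sum.inr 1)) :
      α ⊕ Fin 2 → R) ∈ kB g :=
    Submodule.smul_mem _ _ (Submodule.subset_span ⟨_, _, rfl⟩)
  have h2 := kB_of_inr hg (a := a - y • (Pi.single (Sum.inr 1) (g (Sum.inr 0)) -
    Pi.single (Sum.inr 0) (g (Sum.inr 1)) : α ⊕ Fin 2 → R))
    (by rw [sub_dotProduct, ha, kB_dot hT, sub_zero]) (by
      intro b
      fin_cases b
      · simpa using h0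
      · simpa using h1)
  have := (kB g).add_mem h2 hT
  simpa using this

end Koszul

/-! ### General members of the linear system -/

section Select

variable {K R : Type*} [Field K] [CommRing R] [Algebra K R]
variable {𝒜 : ℤ → Submodule K R} [GradedAlgebra 𝒜] {n : ℕ} {x : Fin n → R}

variable (x) in
/-- The linear form with coefficients `v`. -/
abbrev lin (v : Fin n → K) : R := Fintype.linearCombination K x v

omit [GradedAlgebra 𝒜] in
lemma lin_mem (hx : ∀ i, x i ∈ 𝒜 1) (v : Fin n → K) : lin x v ∈ 𝒜 1 := by
  rw [lin, Fintype.linearCombination_apply]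
  exact Submodule.sum_mem _ fun i _ => Submodule.smul_mem _ _ (hx i)

lemma lin_mem_span (v : Fin n → K) : lin x v ∈ Ideal.span (Set.range x) := by
  rw [lin, Fintype.linearCombination_apply]
  exact Submodule.sum_mem _ fun i _ =>
    Submodule.smul_of_tower_mem _ _ (Ideal.subset_span ⟨i, rfl⟩)

lemma lin_single (i : Fin n) : lin x (Pi.single i (1 : K)) = x i := by
  classical
  simp [lin]

/-- A linear form regular modulo an ideal of positive depth, avoiding finitely many ideals. -/
lemma exists_lin [Infinite K] [IsNoetherianRing R] {r : ℕ} {q : Ideal R} {s : ℤ}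
    (hT : GorT 𝒜 x (r + 1) q s) {S : Set (Ideal R)} (hS : S.Finite)
    (hSx : ∀ P ∈ S, ∃ i, x i ∉ P) : ∃ v : Fin n → K, NZ q (lin x v) ∧ ∀ P ∈ S, lin x v ∉ P := by
  obtain ⟨v, h1, h2⟩ := exists_nz (Fintype.linearCombination K x) {q} (Set.finite_singleton _)
    (by
      rintro _ rfl c hc
      exact hT.socZ c fun i => by
        have := hc (Pi.single i 1)
        rwa [show Fintype.linearCombination K x (Pi.single i 1) = x i from lin_single i] at this)
    S hS (fun P hP => by
      obtain ⟨i, hi⟩ := hSx P hP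
      exact ⟨Pi.single i 1, by
        rwa [show Fintype.linearCombination K x (Pi.single i 1) = x i from lin_single i]⟩)
  exact ⟨v, h1 q rfl, h2⟩

variable {V : Type*} [AddCommGroup V] [Module K V] {F : V →ₗ[K] R} {d : ℤ}

lemma homog_span (hF : ∀ v, F v ∈ 𝒜 d) {α : Type*} (v : α → V) :
    (Ideal.span (Set.range (F ∘ v))).IsHomogeneous 𝒜 :=
  Ideal.homogeneous_span 𝒜 _ (by rintro _ ⟨i, rfl⟩; exact ⟨d, hF _⟩)

/-- A general choice of `i` elements in a linear system of degree `d` with base locus of dimension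
at most one is a regular sequence, as long as `i` is less than the dimension of the ring. -/
lemma exists_seq [Infinite K] [IsNoetherianRing R] [IsDomain R] [∀ i, FiniteDimensional K (𝒜 i)]
    (hneg : ∀ i < 0, 𝒜 i = ⊥) (hx : ∀ i, x i ∈ 𝒜 1)
    (hF : ∀ v, F v ∈ 𝒜 d) (hFx : ∀ v, F v ∈ Ideal.span (Set.range x))
    {m : ℕ} {s₀ : ℤ} (hT₀ : GorT 𝒜 x m ⊥ s₀)
    {S : Set (Ideal R)} (hS : S.Finite) (hSx : ∀ P ∈ S, ∃ i, x i ∉ P)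
    (hSl : ∀ v : Fin n → K, (∀ P ∈ S, lin x v ∉ P) →
      ∃ N, Ideal.span (Set.range x) ^ N ≤ adj (Ideal.span (Set.range F)) (lin x v))
    (i : ℕ) : ∀ r, i + r + 1 = m →
    ∃ (α : Type) (_ : Fintype α) (_ : DecidableEq α) (v : α → V), Fintype.card α = i ∧
      LinearIndependent K v ∧ KReg (F ∘ v) ∧
      GorT 𝒜 x (r + 1) (Ideal.span (Set.range (F ∘ v))) (s₀ + i * d) ∧
      hilb 𝒜 (Ideal.span (Set.range (F ∘ v))) = (dOp d ^ i) (hilb 𝒜 ⊥) := by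
  induction i with
  | zero =>
    intro r hr
    have h0 : Ideal.span (Set.range (F ∘ (Empty.elim : Empty → V))) = ⊥ := by
      rw [Set.range_eq_empty, Ideal.span_empty]
    refine ⟨Empty, inferInstance, inferInstance, Empty.elim, rfl, linearIndependent_empty_type,
      ?_, ?_, ?_⟩
    · intro a _
      rw [Subsingleton.elim a 0]
      exact Submodule.zero_mem _
    · obtain rfl : m = r + 1 := by omega
      rw [h0]; simpa using hT₀
    · rw [h0]; simp
  | succ i ih =>
    intro r hr
    obtain ⟨α, _, _, v, hα, hli, hreg, hT, hh⟩ := ih (r + 1) (by omega)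
    set q := Ideal.span (Set.range (F ∘ v)) with hq
    have hqh : q.IsHomogeneous 𝒜 := homog_span hF v
    have hIh : (Ideal.span (Set.range F)).IsHomogeneous 𝒜 := homog_span hF id
    obtain ⟨u, hu, huS⟩ := exists_lin (K := K) hT hS hSx
    obtain ⟨N, hN⟩ := hSl u huS
    have hcol := GorT.colon_eq hneg hx hqh hT hIh (lin_mem hx u) (lin_mem_span u) hu hN
    obtain ⟨w, hw, -⟩ := exists_nz F {q} (Set.finite_singleton _) (by
      rintro _ rfl c hc
      refine hcol c fun a ha => ?_
      have : Ideal.span (Set.range F) ≤ colI q c := by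
        rw [Ideal.span_le]
        rintro _ ⟨y, rfl⟩
        show c * F y ∈ q
        rw [mul_comm]
        exact hc y
      rw [mul_comm]
      exact this ha) ∅ Set.finite_empty (by simp)
    have hwz : NZ q (F w) := hw q rfl
    have hwq : F w ∉ q := fun h => hT.ne_top ((Ideal.eq_top_iff_one _).2 (hwz 1 (by simpa using h)))
    have hw0 : F w ≠ 0 := fun h => hwq (h ▸ q.zero_mem)
    have hspan : Ideal.span (Set.range (F ∘ Sum.elim v fun _ : Unit => w)) = adj q (F w) := by
      rw [adj, hq, ← Ideal.span_union]
      congr 1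
      rw [Sum.comp_elim, Set.Sum.elim_range]
      simp [Function.comp_def]
    refine ⟨α ⊕ Unit, inferInstance, inferInstance, Sum.elim v fun _ => w, by simp [hα], ?_, ?_,
      ?_, ?_⟩
    · have hsub : Submodule.span K (Set.range v) ≤ (q.restrictScalars K).comap F := by
        rw [Submodule.span_le]
        rintro _ ⟨i, rfl⟩
        exact Ideal.subset_span ⟨i, rfl⟩
      have hwv : w ∉ Submodule.span K (Set.range v) := fun h => hwq (hsub h)
      refine LinearIndependent.sum_type hli ?_ ?_
      · exact LinearIndependent.of_subsingleton () fun h => hw0 (by rw [h, map_zero])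
      · rw [Set.range_const]
        exact (Submodule.disjoint_span_singleton_of_notMem hwv)
    · exact KReg.extend (g := F ∘ Sum.elim v fun _ : Unit => w) hreg hwz
    · rw [hspan]
      have := GorT.step hx _ hqh hT (hF w) (hFx w) hwz
      convert this using 1
      push_cast; ring
    · rw [hspan, hilb_adj (hF w) hw0 hqh hwz, hh, pow_succ', Module.End.mul_apply]

end Select

/-! ### Syzygies modulo a regular sequence -/

section Core

open Matrix

variable {K R : Type*} [Field K] [CommRing R] [Algebra K R]
variable {𝒜 : ℤ → Submodule K R} [GradedAlgebra 𝒜] {n : ℕ} {x : Fin n → R}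
variable {α : Type*} [Fintype α] [DecidableEq α] {g : α ⊕ Fin 2 → R} {d : ℤ}

open scoped Pointwise in
omit [GradedAlgebra 𝒜] in
/-- If the Hilbert function of `R ⧸ q` vanishes in degree `T`, then `q` contains the `T`-th power
of the irrelevant ideal. -/
lemma pow_le_of_hilb [SetLike.GradedMonoid 𝒜] [∀ i, FiniteDimensional K (𝒜 i)]
    (hx : ∀ i, x i ∈ 𝒜 1) {q : Ideal R}
    {T : ℕ} (h : hilb 𝒜 q T = 0) : Ideal.span (Set.range x) ^ T ≤ q := by
  have hT : 𝒜 T ≤ q.restrictScalars K := by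
    have h1 : ((q.restrictScalars K ⊓ 𝒜 T : Submodule K R)) =
        ((⊤ : Ideal R).restrictScalars K ⊓ 𝒜 T : Submodule K R) := by
      have : FiniteDimensional K ((⊤ : Ideal R).restrictScalars K ⊓ 𝒜 T : Submodule K R) :=
        Submodule.finiteDimensional_of_le inf_le_right
      refine Submodule.eq_of_le_of_finrank_eq (fun a ha => ⟨trivial, ha.2⟩) ?_
      simp only [hilb, gd] at h
      omega
    intro a ha
    have : a ∈ (q.restrictScalars K ⊓ 𝒜 T : Submodule K R) := by
      rw [h1]; exact ⟨trivial, ha⟩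
    exact this.1
  have hpow : ∀ m : ℕ, ∀ a ∈ (Set.range x) ^ m, a ∈ 𝒜 (m : ℤ) := by
    intro m
    induction m with
    | zero =>
      intro a ha
      rw [pow_zero, Set.mem_one] at ha
      subst ha
      exact SetLike.one_mem_graded 𝒜
    | succ m ih =>
      intro a ha
      rw [pow_succ] at ha
      obtain ⟨y, hy, _, ⟨i, rfl⟩, rfl⟩ := ha
      have := SetLike.mul_mem_graded (ih y hy) (hx i)
      simpa using this
  rw [Ideal.span, Submodule.span_pow, Submodule.span_le]
  exact fun a ha => hT (hpow T a ha)

omit [DecidableEq α] in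
/-- A relation between the last two generators modulo the first ones extends to a homogeneous
syzygy. -/
lemma exists_syz (hg : ∀ j, g j ∈ 𝒜 d) {i : ℤ} {X Y : R} (hX : X ∈ 𝒜 i) (hY : Y ∈ 𝒜 i)
    (h : X * g (Sum.inr 0) + Y * g (Sum.inr 1) ∈ Ideal.span (Set.range (g ∘ Sum.inl))) :
    ∃ a : α ⊕ Fin 2 → R, (∀ j, a j ∈ 𝒜 i) ∧ a ⬝ᵥ g = 0 ∧ a (Sum.inr 0) = X ∧
      a (Sum.inr 1) = Y := by
  obtain ⟨u, hu⟩ := mem_span_dot.1 h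
  have h1 : X * g (Sum.inr 0) + Y * g (Sum.inr 1) ∈ 𝒜 (d + i) := by
    rw [mul_comm X, mul_comm Y]
    exact Submodule.add_mem _ (mul_mem_deg (hg _) hX) (mul_mem_deg (hg _) hY)
  refine ⟨Sum.elim (fun j => -pr 𝒜 i (u j)) ![X, Y], ?_, ?_, rfl, rfl⟩
  · rintro (j | j)
    · exact Submodule.neg_mem _ (pr_mem _ _ _)
    · fin_cases j
      · exact hX
      · exact hY
  · have h2 := congrArg (pr 𝒜 (d + i)) hu
    rw [pr_same h1, dotProduct, map_sum] at h2
    have h3 : ∀ j, pr 𝒜 (d + i) (u j * (g ∘ Sum.inl) j) = pr 𝒜 i (u j) * g (Sum.inl j) := by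
      intro j
      rw [mul_comm, mul_comm (pr 𝒜 i (u j))]
      exact pr_mul (hg _) _ _
    simp only [h3] at h2
    rw [dot_sum]
    simp only [dotProduct, Sum.elim_inl, Sum.elim_inr, Function.comp_apply, neg_mul,
      Finset.sum_neg_distrib, h2, Fin.sum_univ_two, Matrix.cons_val_zero, Matrix.cons_val_one]
    ring

variable [IsDomain R] [∀ i, FiniteDimensional K (𝒜 i)]

/-- If all low-degree syzygies of `g = (𝔟, p, q)` are Koszul boundaries, for the
ideal `𝔟 = (g ∘ Sum.inl)`, then in low degrees the Hilbert function of `R ⧸ (g)` is the one of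
`R ⧸ 𝔟` modulo a regular sequence of length two, up to a correction by the dimension of
`(𝔟 : (p, q)) ⧸ 𝔟`. -/
lemma hilb_formula (hg : ∀ j, g j ∈ 𝒜 d) (hp : g (Sum.inr 0) ≠ 0) (hq : g (Sum.inr 1) ≠ 0)
    {b : Ideal R} (hb : b = Ideal.span (Set.range (g ∘ Sum.inl)))
    {ν₀ : ℤ} (hA : ∀ e : ℤ, e + d ≤ ν₀ → ∀ a : α ⊕ Fin 2 → R, (∀ j, a j ∈ 𝒜 e) → a ⬝ᵥ g = 0 →
      a ∈ kB g) (ν : ℤ) (hν : ν ≤ ν₀) :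
    hilb 𝒜 (adj (adj b (g (Sum.inr 0))) (g (Sum.inr 1))) ν =
      hilb 𝒜 b ν - 2 * hilb 𝒜 b (ν - d) + hilb 𝒜 b (ν - d - d) -
      (gd 𝒜 (colI b (g (Sum.inr 0)) ⊓ colI b (g (Sum.inr 1))) (ν - d - d) -
        gd 𝒜 b (ν - d - d)) := by
  set p := g (Sum.inr 0) with hpdef
  set q := g (Sum.inr 1) with hqdef
  have hbh : b.IsHomogeneous 𝒜 := by
    rw [hb]
    exact Ideal.homogeneous_span 𝒜 _ (by rintro _ ⟨i, rfl⟩; exact ⟨d, hg _⟩)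
  have syz : ∀ X ∈ 𝒜 (ν - d), ∀ Y ∈ 𝒜 (ν - d), X * p + Y * q ∈ b →
      ∃ y, Y - y * p ∈ b ∧ X + y * q ∈ b := by
    intro X hX Y hY h
    rw [hb] at h
    obtain ⟨a, ha, hdot, rfl, rfl⟩ := exists_syz hg hX hY h
    rw [hb]
    exact kB_proj (hA _ (by omega) a ha hdot)
  have e1 := gd_adj (hg (Sum.inr 1)) hq (isHomogeneous_adj hbh (hg (Sum.inr 0))) ν
  have e2 := gd_adj (hg (Sum.inr 0)) hp hbh ν
  have e3 : gd 𝒜 (colI (adj b p) q) (ν - d) = gd 𝒜 (adj b p) (ν - d) := by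
    refine gd_congr fun Y hY => ⟨fun h => ?_, fun h => Ideal.mul_mem_left _ q h⟩
    obtain ⟨c, hc⟩ := mem_adj.1 (mem_colI.1 h)
    have hc' := pr_mem_ideal hbh hc (d + (ν - d))
    rw [map_sub, pr_mul (hg _), pr_mul (hg _), pr_same hY] at hc'
    obtain ⟨y, h1, -⟩ := syz (-pr 𝒜 (ν - d) c) (Submodule.neg_mem _ (pr_mem _ _ _)) Y hY (by
      convert hc' using 1; ring)
    exact mem_adj.2 ⟨y, by rwa [mul_comm]⟩
  have e4 := gd_adj (hg (Sum.inr 0)) hp hbh (ν - d)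
  have e5 := finrank_zsum (hg (Sum.inr 1)) hq (colI b p) b (ν - d - d) (ν - d) (by ring)
  have e6 : zsum 𝒜 q (colI b p) b (ν - d - d) (ν - d) =
      ((colI b p).restrictScalars K ⊓ 𝒜 (ν - d) : Submodule K R) := by
    apply le_antisymm
    · refine sup_le ?_ ?_
      · rintro _ ⟨c, ⟨hc1, hc2⟩, rfl⟩
        refine ⟨Ideal.mul_mem_left _ q hc1, ?_⟩
        have := mul_mem_deg (hg (Sum.inr 1)) hc2
        rwa [add_sub_cancel] at this
      · rintro c ⟨h1, h2⟩
        exact ⟨Ideal.mul_mem_left _ p h1, h2⟩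
    · rintro X ⟨h1, h2⟩
      obtain ⟨y, h3, h4⟩ := syz X h2 0 (Submodule.zero_mem _) (by
        rw [zero_mul, add_zero, mul_comm]; exact h1)
      have h3' := pr_mem_ideal hbh h3 (d + (ν - d - d))
      have h4' := pr_mem_ideal hbh h4 (ν - d)
      rw [zero_sub, map_neg, mul_comm, pr_mul (hg _)] at h3'
      rw [map_add, mul_comm, pr_same h2, pr_mul' (hg _)] at h4'
      have hd : q * pr 𝒜 (ν - d - d) y ∈ 𝒜 (ν - d) := by
        have := mul_mem_deg (hg (Sum.inr 1)) (pr_mem 𝒜 (ν - d - d) y)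
        rwa [add_sub_cancel] at this
      refine Submodule.mem_sup.2 ⟨q * -pr 𝒜 (ν - d - d) y,
        ⟨_, ⟨?_, Submodule.neg_mem _ (pr_mem _ _ _)⟩, rfl⟩,
        X + q * pr 𝒜 (ν - d - d) y, ⟨h4', Submodule.add_mem _ h2 hd⟩, by ring⟩
      show p * _ ∈ b
      convert h3' using 1
      ring
  rw [e6] at e5
  change gd 𝒜 (colI b p) (ν - d) + _ = _ at e5
  simp only [hilb]
  linarith

end Core

/-! ### The numerical contradiction -/

section Core2

open Matrix

variable {K R : Type*} [Field K] [CommRing R] [Algebra K R]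
variable {𝒜 : ℤ → Submodule K R} [GradedAlgebra 𝒜] {n : ℕ} {x : Fin n → R}
variable {α : Type*} [Fintype α] [DecidableEq α] {g : α ⊕ Fin 2 → R}

/-- Multiplication by a form `z` regular modulo `b` embeds `P ⧸ b` into itself. -/
lemma mul_lin_pow [IsDomain R] [∀ i, FiniteDimensional K (𝒜 i)] {z : R} {t : ℤ} (hz : z ∈ 𝒜 t)
    (hz0 : z ≠ 0) {b P : Ideal R} (hzb : NZ b z) (hbP : b ≤ P) (i : ℤ) :
    gd 𝒜 P i - gd 𝒜 b i ≤ gd 𝒜 P (t + i) - gd 𝒜 b (t + i) := by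
  have h := finrank_zsum hz hz0 P b i (t + i) rfl
  have h1 : gd 𝒜 (P ⊓ colI b z) i = gd 𝒜 b i :=
    gd_congr fun a _ => ⟨fun ha => hzb a ha.2, fun ha => ⟨hbP ha, b.mul_mem_left z ha⟩⟩
  have h2 : (Module.finrank K (zsum 𝒜 z P b i (t + i)) : ℤ) ≤ gd 𝒜 P (t + i) := by
    have : FiniteDimensional K (P.restrictScalars K ⊓ 𝒜 (t + i) : Submodule K R) :=
      Submodule.finiteDimensional_of_le inf_le_right
    refine Int.ofNat_le.2 (Submodule.finrank_mono (sup_le ?_ ?_))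
    · rintro _ ⟨c, ⟨hc1, hc2⟩, rfl⟩
      exact ⟨P.mul_mem_left z hc1, mul_mem_deg hz hc2⟩
    · exact fun c hc => ⟨hbP hc.1, hc.2⟩
  linarith

/-- A drop of the Hilbert function of `R ⧸ I` forces multiplication to be non-injective. -/
lemma exists_of_hilb_lt [IsDomain R] [∀ i, FiniteDimensional K (𝒜 i)] {z : R} {t : ℤ}
    (hz : z ∈ 𝒜 t) (hz0 : z ≠ 0) {I : Ideal R} (i : ℤ)
    (h : hilb 𝒜 I (t + i) < hilb 𝒜 I i) : ∃ u ∈ 𝒜 i, u ∉ I ∧ z * u ∈ I := by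
  by_contra! hcon
  have h1 : gd 𝒜 (⊤ ⊓ colI I z) i = gd 𝒜 I i :=
    gd_congr fun a ha => ⟨fun h => by_contra fun hI => hcon a ha hI h.2,
      fun h => ⟨trivial, I.mul_mem_left z h⟩⟩
  have h2 := finrank_zsum hz hz0 ⊤ I i (t + i) rfl
  have h3 : (Module.finrank K (zsum 𝒜 z ⊤ I i (t + i)) : ℤ) ≤ gd 𝒜 ⊤ (t + i) := by
    have : FiniteDimensional K ((⊤ : Ideal R).restrictScalars K ⊓ 𝒜 (t + i) : Submodule K R) :=
      Submodule.finiteDimensional_of_le inf_le_right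
    refine Int.ofNat_le.2 (Submodule.finrank_mono (sup_le ?_ ?_))
    · rintro _ ⟨c, ⟨hc1, hc2⟩, rfl⟩
      exact ⟨trivial, mul_mem_deg hz hc2⟩
    · exact fun c hc => ⟨trivial, hc.2⟩
  simp only [hilb] at h
  linarith

/-- If `𝔟` is generated by a regular sequence of length `dim R - 1` and `ℓ` is a linear form
regular modulo `𝔟`, then an element `u ∉ I = 𝔟 + (p, q)` of degree `j` with `ℓ ^ t u ∈ I` produces,
by duality in the Artinian Gorenstein ring `R ⧸ (𝔟, ℓ ^ N)`, a torsion syzygy with coefficients of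
degree `s + d - j` that is not a Koszul boundary. -/
lemma exists_torsion [Infinite K] [IsNoetherianRing R] [IsDomain R] [∀ i, FiniteDimensional K (𝒜 i)]
    (hneg : ∀ i < 0, 𝒜 i = ⊥) (hx : ∀ i, x i ∈ 𝒜 1) {d : ℤ} (hg : ∀ j, g j ∈ 𝒜 d)
    {b : Ideal R} (hb : b = Ideal.span (Set.range (g ∘ Sum.inl)))
    (hreg : KReg (g ∘ Sum.inl)) {s : ℤ} (hT : GorT 𝒜 x 1 b s)
    {l : R} (hld : l ∈ 𝒜 1) (hlm : l ∈ Ideal.span (Set.range x)) (hl : NZ b l)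
    {M : ℕ} (hM : Ideal.span (Set.range x) ^ M ≤ adj b l)
    {t : ℕ} {j : ℤ} {u : R} (hu : u ∈ 𝒜 j)
    (huI : u ∉ adj (adj b (g (Sum.inr 0))) (g (Sum.inr 1)))
    (hlu : l ^ t * u ∈ adj (adj b (g (Sum.inr 0))) (g (Sum.inr 1))) :
    ∃ a : α ⊕ Fin 2 → R, (∀ i, a i ∈ 𝒜 (s + d - j)) ∧ a ⬝ᵥ g = 0 ∧
      (∃ M : ℕ, ∀ e ∈ Ideal.span (Set.range x) ^ M, e • a ∈ kB g) ∧ a ∉ kB g := by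
  set p := g (Sum.inr 0) with hpdef
  set q := g (Sum.inr 1) with hqdef
  have hp : p ∈ 𝒜 d := hg _
  have hq : q ∈ 𝒜 d := hg _
  have hbh : b.IsHomogeneous 𝒜 := by
    rw [hb]
    exact Ideal.homogeneous_span 𝒜 _ (by rintro _ ⟨i, rfl⟩; exact ⟨d, hg _⟩)
  have hIh : (adj (adj b p) q).IsHomogeneous 𝒜 := isHomogeneous_adj (isHomogeneous_adj hbh hp) hq
  have hbI : b ≤ adj (adj b p) q := (le_adj _ _).trans (le_adj _ _)
  -- `N` exceeds the degree of `u`, so that `u` stays nonzero modulo `I + (l ^ N)`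
  obtain ⟨N, hN, hN0⟩ : ∃ N : ℕ, j < N ∧ N ≠ 0 := ⟨j.toNat + 1, by omega, by omega⟩
  have hlN := pow_mem_deg hld N
  have hlNz : NZ b (l ^ N) := hl.pow N
  have hTa : GorT 𝒜 x 0 (adj b (l ^ N)) (s + N) :=
    GorT.step hx 0 hbh hT hlN (Ideal.pow_mem_of_mem _ hlm N (Nat.pos_of_ne_zero hN0)) hlNz
  have hah : (adj b (l ^ N)).IsHomogeneous 𝒜 := isHomogeneous_adj hbh hlN
  obtain ⟨M', hM'⟩ : ∃ M', Ideal.span (Set.range x) ^ M' ≤ adj b (l ^ N) := by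
    refine Ideal.exists_pow_le_of_le_radical_of_fg ?_ (IsNoetherian.noetherian _)
    have h1 : adj b l ≤ (adj b (l ^ N)).radical := by
      refine sup_le ((le_adj _ _).trans Ideal.le_radical) ?_
      rw [Ideal.span_singleton_le_iff_mem]
      exact ⟨N, self_mem_adj _ _⟩
    intro y hy
    exact Ideal.mem_radical_of_pow_mem (h1 (hM (Ideal.pow_mem_pow hy M)))
  have huJ : u ∉ adj (adj (adj b p) q) (l ^ N) := by
    intro h
    obtain ⟨c, hc⟩ := mem_adj.1 h
    have hc' := pr_mem_ideal hIh hc j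
    have h0 : pr 𝒜 (j - N) c = 0 := by
      have := pr_mem 𝒜 (j - N) c
      rwa [hneg _ (by omega), Submodule.mem_bot] at this
    rw [map_sub, pr_same hu, pr_mul' hlN, h0, mul_zero, sub_zero] at hc'
    exact huI hc'
  obtain ⟨w, hwd, hwJ, huw⟩ := GorT.dual hah hTa hM' (isHomogeneous_adj hIh hlN)
    (sup_le_sup_right hbI _) hu huJ
  have key : ∀ c ∈ 𝒜 d, c ∈ adj (adj b p) q →
      ∃ e ∈ 𝒜 (s + d - j), c * w - l ^ N * e ∈ b := by
    intro c hc hcI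
    obtain ⟨e, he⟩ := mem_adj.1 (hwJ c (le_adj _ _ hcI))
    refine ⟨pr 𝒜 (s + d - j) e, pr_mem _ _ _, ?_⟩
    have he' := pr_mem_ideal hbh he (d + (s + N - j))
    rw [map_sub, pr_same (mul_mem_deg hc hwd), pr_mul' hlN] at he'
    convert he' using 5
    ring
  obtain ⟨B, hBd, hB⟩ := key p hp (le_adj _ _ (self_mem_adj _ _))
  obtain ⟨A, hAd, hA⟩ := key q hq (self_mem_adj _ _)
  have hrel : A * p + -B * q ∈ b := by
    refine hlNz _ ?_
    have := b.sub_mem (b.mul_mem_left q hB) (b.mul_mem_left p hA)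
    convert this using 1
    ring
  obtain ⟨a, had, hdot, ha0, ha1⟩ := exists_syz hg hAd (Submodule.neg_mem _ hBd) (hb ▸ hrel)
  have hla : l ^ N • a ∈ kB g := by
    refine kB_of_proj hreg (y := -w) (by rw [smul_dotProduct, hdot, smul_zero]) ?_ ?_
    · rw [← hb]
      convert hB using 1
      simp only [Pi.smul_apply, smul_eq_mul, ha1]; ring
    · rw [← hb]
      convert b.neg_mem hA using 1
      simp only [Pi.smul_apply, smul_eq_mul, ha0]; ring
  refine ⟨a, had, hdot, ⟨M', fun e he => ?_⟩, fun hkB => ?_⟩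
  · obtain ⟨c, hc⟩ := mem_adj.1 (hM' he)
    have hc' : e - l ^ N * c ∈ Ideal.span (Set.range g) := by
      refine Ideal.span_mono ?_ (hb ▸ hc)
      exact Set.range_comp_subset_range _ _
    have := (kB g).add_mem (smul_mem_kB hdot hc') ((kB g).smul_mem c hla)
    rwa [smul_smul, ← add_smul, mul_comm c, sub_add_cancel] at this
  · obtain ⟨y, h1, h2⟩ := kB_proj hkB
    rw [← hb, ha1] at h1
    rw [← hb, ha0] at h2
    have hp' : p * (w + l ^ N * y) ∈ b := by
      have := b.sub_mem hB (b.mul_mem_left (l ^ N) h1)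
      convert this using 1
      ring
    have hq' : q * (w + l ^ N * y) ∈ b := by
      have := b.add_mem hA (b.mul_mem_left (l ^ N) h2)
      convert this using 1
      ring
    have hI : adj (adj b p) q ≤ colI b (w + l ^ N * y) := by
      refine sup_le (sup_le (fun c hc => b.mul_mem_left _ hc) ?_) ?_
      · rw [Ideal.span_singleton_le_iff_mem, mem_colI, mul_comm]; exact hp'
      · rw [Ideal.span_singleton_le_iff_mem, mem_colI, mul_comm]; exact hq'
    have h3 : u * (w + l ^ N * y) ∈ b := by
      refine hl.pow t _ ?_
      have := mem_colI.1 (hI hlu)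
      convert this using 1
      ring
    exact huw (mem_adj.2 ⟨-(u * y), by convert h3 using 1; ring⟩)

/-- The numerical heart of the argument. The ring `R` has the Hilbert series of a polynomial ring in
`m + 1` variables, and the forms `g` of degree `c + 1` consist of a regular sequence, which cuts down
the Hilbert series like `m` elements, and two more nonzero forms. Then it is impossible that all
syzygies in low degrees (`hA`) and all torsion syzygies in degree `ν₀` (`hB`) are boundaries. -/
theorem core [Infinite K] [IsNoetherianRing R] [IsDomain R] [∀ i, FiniteDimensional K (𝒜 i)]
    (hneg : ∀ i < 0, 𝒜 i = ⊥) (hx : ∀ i, x i ∈ 𝒜 1) {m c : ℕ} (hm : 2 ≤ m) (hc : 1 ≤ c)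
    (hρ : (dOp 1 ^ (m + 1)) (hilb 𝒜 ⊥) = Pi.single 0 1)
    (hg : ∀ j, g j ∈ 𝒜 (c + 1 : ℕ)) (hp : g (Sum.inr 0) ≠ 0) (hq : g (Sum.inr 1) ≠ 0)
    {b : Ideal R} (hb : b = Ideal.span (Set.range (g ∘ Sum.inl)))
    (hreg : KReg (g ∘ Sum.inl))
    (hT : GorT 𝒜 x 1 b (-(m + 1 : ℕ) + m * (c + 1 : ℕ)))
    (hbh : hilb 𝒜 b = (dOp (c + 1 : ℕ) ^ m) (hilb 𝒜 ⊥))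
    {ν₀ : ℤ} (hν₀ : ν₀ = (((m + 1) * c + 2) / 2 : ℕ))
    (hA : ∀ e : ℤ, e + (c + 1 : ℕ) ≤ ν₀ → ∀ a : α ⊕ Fin 2 → R, (∀ j, a j ∈ 𝒜 e) →
      a ⬝ᵥ g = 0 → a ∈ kB g)
    (hB : ∀ a : α ⊕ Fin 2 → R, (∀ j, a j ∈ 𝒜 ν₀) → a ⬝ᵥ g = 0 →
      (∃ M : ℕ, ∀ e ∈ Ideal.span (Set.range x) ^ M, e • a ∈ kB g) → a ∈ kB g) : False := by
  obtain ⟨v, hl, -⟩ := exists_lin (K := K) hT Set.finite_empty (by simp)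
  set l := lin x v with hldef
  have hld : l ∈ 𝒜 1 := lin_mem hx v
  have hlm : l ∈ Ideal.span (Set.range x) := lin_mem_span v
  have hbhom : b.IsHomogeneous 𝒜 := by
    rw [hb]
    exact Ideal.homogeneous_span 𝒜 _ (by rintro _ ⟨i, rfl⟩; exact ⟨_, hg _⟩)
  have hl0 : l ≠ 0 := by
    intro h0
    refine hT.ne_top ((Ideal.eq_top_iff_one _).2 (hl 1 ?_))
    rw [h0, zero_mul]; exact b.zero_mem
  have hM : Ideal.span (Set.range x) ^ (m * c + 1) ≤ adj b l := by
    refine pow_le_of_hilb hx ?_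
    have hcomm : Commute (dOp 1) (dOp (c + 1 : ℕ) ^ m) := by
      refine Commute.pow_right ?_ m
      refine LinearMap.ext fun a => funext fun i => ?_
      simp only [Module.End.mul_apply, dOp_apply]
      rw [show i - 1 - ((c + 1 : ℕ) : ℤ) = i - ((c + 1 : ℕ) : ℤ) - 1 by ring]
      ring
    rw [hilb_adj hld hl0 hbhom hl, hbh, ← Module.End.mul_apply, hcomm.eq, Module.End.mul_apply,
      dOp_pow_eq_hCI _ _ _ (by rw [← Module.End.mul_apply, ← pow_succ, hρ]), ← hCI_symm]
    exact hCI_neg _ _ _ (by push_cast; omega)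
  -- the difference with step `d` of the Hilbert function of `R ⧸ b`
  have hH : ∀ i, hilb 𝒜 b i - hilb 𝒜 b (i - (c + 1 : ℕ)) = hCI (c + 1) (m + 1) i := by
    intro i
    rw [← dOp_pow_eq_hCI _ _ _ hρ, pow_succ', Module.End.mul_apply, ← hbh, dOp_apply]
  obtain ⟨S, hS⟩ : ∃ S, S = (m + 1) * c := ⟨_, rfl⟩
  have hS' : ((m + 1 : ℕ) : ℤ) * c = S := by rw [hS]; push_cast; ring
  have hSc : 3 * c ≤ S := by rw [hS]; exact Nat.mul_le_mul_right c (by omega)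
  rw [← hS] at hν₀
  -- `j` is the mirror image of `ν₀` under the symmetry of `hCI`, and `t = ν₀ - j` is `1` or `2`
  obtain ⟨t, ht⟩ : ∃ t : ℕ, (t : ℤ) = 2 * ν₀ - S := ⟨(2 * ν₀ - S).toNat, by omega⟩
  have ht0 : 0 < t := by omega
  obtain ⟨j, hj⟩ : ∃ j : ℤ, j = S - ν₀ := ⟨_, rfl⟩
  have htj : t + j = ν₀ := by omega
  set P := colI b (g (Sum.inr 0)) ⊓ colI b (g (Sum.inr 1)) with hP
  have hbP : b ≤ P := fun a ha => ⟨b.mul_mem_left _ ha, b.mul_mem_left _ ha⟩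
  have hlt := pow_mem_deg hld t
  have f1 := hilb_formula hg hp hq hb hA ν₀ le_rfl
  have f2 := hilb_formula hg hp hq hb hA j (by omega)
  have f3 := mul_lin_pow hlt (pow_ne_zero t hl0) (hl.pow t) hbP
    (j - (c + 1 : ℕ) - (c + 1 : ℕ))
  rw [show (t : ℤ) + (j - (c + 1 : ℕ) - (c + 1 : ℕ)) = ν₀ - (c + 1 : ℕ) - (c + 1 : ℕ) by
    rw [← htj]; ring] at f3
  have g1 := hH ν₀
  have g2 := hH (ν₀ - (c + 1 : ℕ))
  have g3 := hH j
  have g4 := hH (j - (c + 1 : ℕ))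
  have g5 : hCI (c + 1) (m + 1) j = hCI (c + 1) (m + 1) ν₀ := by
    rw [← hCI_symm c (m + 1) ν₀, hS', hj]
  have g6 : hCI (c + 1) (m + 1) (j - (c + 1 : ℕ)) < hCI (c + 1) (m + 1) (ν₀ - (c + 1 : ℕ)) :=
    hCI_lt c (m + 1) (by omega) _ _ (by omega) (by rw [hS']; omega) (by omega)
  obtain ⟨u, hu, huI, hlu⟩ := exists_of_hilb_lt
    (I := adj (adj b (g (Sum.inr 0))) (g (Sum.inr 1))) hlt (pow_ne_zero t hl0) j (by
    rw [htj]; linarith)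
  obtain ⟨a, had, hdot, htor, hna⟩ := exists_torsion hneg hx hg hb hreg hT hld hlm hl hM hu huI hlu
  refine hna (hB a (fun i => ?_) hdot htor)
  have := had i
  convert this using 2
  have hmc : (m : ℤ) * c + c = S := by rw [← hS']; push_cast; ring
  rw [hj]
  push_cast
  linear_combination -hmc

end Core2

/-! ### The polynomial ring -/

section Poly

/-- The standard grading of the polynomial ring, extended by zero to negative degrees. -/
def gr (K : Type*) [Field K] (n : ℕ) : ℤ → Submodule K (MvPolynomial (Fin n) K) :=
  weightedHomogeneousSubmodule K (fun _ : Fin n => (1 : ℤ))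

variable {K : Type*} [Field K] {n : ℕ}

instance : GradedAlgebra (gr K n) := weightedGradedAlgebra K _

lemma mem_gr {i : ℤ} {p : MvPolynomial (Fin n) K} :
    p ∈ gr K n i ↔ ∀ m ∈ p.support, ((Finsupp.degree m : ℕ) : ℤ) = i := by
  rw [gr, mem_weightedHomogeneousSubmodule, IsWeightedHomogeneous]
  have : ∀ m : Fin n →₀ ℕ,
      Finsupp.weight (fun _ : Fin n => (1 : ℤ)) m = ((Finsupp.degree m : ℕ) : ℤ) := by
    intro m
    rw [Finsupp.degree_apply]
    simp [Finsupp.weight_apply, Finsupp.sum]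
  simp only [this, mem_support_iff]

lemma mem_gr_nat {d : ℕ} {p : MvPolynomial (Fin n) K} :
    p ∈ gr K n d ↔ p.IsHomogeneous d := by
  rw [mem_gr, IsHomogeneous, IsWeightedHomogeneous]
  have : ∀ m : Fin n →₀ ℕ, Finsupp.weight (1 : Fin n → ℕ) m = Finsupp.degree m := by
    intro m
    rw [Finsupp.degree_apply]
    simp [Finsupp.weight_apply, Finsupp.sum]
  simp only [this, mem_support_iff, Nat.cast_inj]

lemma gr_neg {i : ℤ} (hi : i < 0) : gr K n i = ⊥ := by
  rw [eq_bot_iff]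
  intro p hp
  rw [Submodule.mem_bot, ← support_eq_empty, Finset.eq_empty_iff_forall_notMem]
  intro m hm
  have := mem_gr.1 hp m hm
  omega

instance (i : ℤ) : FiniteDimensional K (gr K n i) := by
  by_cases hi : i < 0
  · rw [gr_neg hi]; infer_instance
  · obtain ⟨d, rfl⟩ := Int.eq_ofNat_of_zero_le (not_lt.1 hi)
    have : gr K n (d : ℤ) = homogeneousSubmodule (Fin n) K d := by
      ext p
      exact mem_gr_nat
    rw [this]
    exact Module.Finite.iff_fg.2 (homogeneousSubmodule_fg _ _ d)

lemma X_mem_gr (i : Fin n) : (X i : MvPolynomial (Fin n) K) ∈ gr K n 1 := by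
  have := mem_gr_nat.2 (isHomogeneous_X K i)
  exact_mod_cast this

variable (K n) in
/-- The ideal generated by the first `i` variables. -/
def varIdeal (i : ℕ) : Ideal (MvPolynomial (Fin n) K) :=
  Ideal.span (X '' {j : Fin n | (j : ℕ) < i})

lemma varIdeal_zero : varIdeal K n 0 = ⊥ := by simp [varIdeal]

lemma varIdeal_self : varIdeal K n n = Ideal.span (Set.range X) := by
  rw [varIdeal, ← Set.image_univ]
  congr 2
  ext j
  simp

lemma varIdeal_succ {i : ℕ} (hi : i < n) :
    varIdeal K n (i + 1) = adj (varIdeal K n i) (X ⟨i, hi⟩) := by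
  rw [varIdeal, varIdeal, adj, ← Ideal.span_union]
  congr 1
  rw [← Set.image_singleton, ← Set.image_union]
  congr 1
  ext j
  simp [Fin.ext_iff]
  omega

lemma varIdeal_nz {i : ℕ} (hi : i < n) : NZ (varIdeal K n i) (X ⟨i, hi⟩) := by
  intro c hc
  rw [varIdeal, mem_ideal_span_X_image] at hc ⊢
  intro m hm
  obtain ⟨j, hj, hmj⟩ := hc (Finsupp.single ⟨i, hi⟩ 1 + m) (by
    rw [support_X_mul, Finset.mem_map]
    exact ⟨m, hm, rfl⟩)
  refine ⟨j, hj, ?_⟩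
  have : (⟨i, hi⟩ : Fin n) ≠ j := by
    rintro rfl
    exact absurd (show i < i from hj) (lt_irrefl _)
  simpa [Finsupp.single_apply, this] using hmj

lemma varIdeal_homog (i : ℕ) : (varIdeal K n i).IsHomogeneous (gr K n) :=
  Ideal.homogeneous_span _ _ (by rintro _ ⟨j, -, rfl⟩; exact ⟨1, X_mem_gr j⟩)

lemma mem_m_iff {p : MvPolynomial (Fin n) K} :
    p ∈ Ideal.span (Set.range (X : Fin n → MvPolynomial (Fin n) K)) ↔ constantCoeff p = 0 := by
  rw [← Set.image_univ, mem_ideal_span_X_image, constantCoeff_eq]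
  constructor
  · intro h
    by_contra h0
    obtain ⟨i, -, hi⟩ := h 0 (mem_support_iff.2 h0)
    exact hi rfl
  · intro h m hm
    by_contra! hcon
    have : m = 0 := Finsupp.ext fun i => hcon i trivial
    rw [this, mem_support_iff] at hm
    exact hm h

/-- The variables not in `varIdeal K n i` form a regular sequence modulo it, and the socle of the
residue field `R ⧸ 𝔪` is spanned by `1`, of degree `0`. -/
lemma gorT_varIdeal (r : ℕ) : ∀ i, i + r = n →
    GorT (gr K n) X r (varIdeal K n i) (-(r : ℤ)) := by
  induction r with
  | zero =>
    rintro i rfl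
    rw [add_zero, varIdeal_self]
    refine ⟨1, by simpa using mem_gr_nat.2 (isHomogeneous_one (Fin i) K), ?_, ?_, ?_⟩
    · rw [mem_m_iff]; simp
    · intro j
      rw [mul_one]
      exact Ideal.subset_span ⟨j, rfl⟩
    · intro c _
      refine ⟨constantCoeff c, ?_⟩
      rw [mem_m_iff, map_sub, smul_eq_C_mul]
      simp
  | succ r ih =>
    intro i hi
    have hi' : i < n := by omega
    refine ⟨1, X ⟨i, hi'⟩, X_mem_gr _, Ideal.subset_span ⟨_, rfl⟩, varIdeal_nz hi', ?_⟩
    rw [← varIdeal_succ hi']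
    convert ih (i + 1) (by omega) using 1
    push_cast; ring

lemma hilb_varIdeal (i : ℕ) (hi : i ≤ n) :
    hilb (gr K n) (varIdeal K n i) = (dOp 1 ^ i) (hilb (gr K n) ⊥) := by
  induction i with
  | zero => rw [varIdeal_zero]; simp
  | succ i ih =>
    have hz : (X ⟨i, hi⟩ : MvPolynomial (Fin n) K) ≠ 0 := X_ne_zero _
    have h := hilb_adj (𝒜 := gr K n) (X_mem_gr ⟨i, hi⟩) hz (varIdeal_homog i) (varIdeal_nz hi)
    rw [varIdeal_succ hi, h, ih (by omega), pow_succ', Module.End.mul_apply]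

/-- The Hilbert series of the polynomial ring is `1 / (1 - T) ^ n`. -/
lemma hilb_bot : (dOp 1 ^ n) (hilb (gr K n) ⊥) = Pi.single 0 1 := by
  rw [← hilb_varIdeal n le_rfl, varIdeal_self]
  funext i
  by_cases hi : i = 0
  · subst hi
    have h1 : gd (gr K n) (Ideal.span (Set.range X)) 0 = 0 := by
      have : ((Ideal.span (Set.range (X : Fin n → MvPolynomial (Fin n) K))).restrictScalars K ⊓
          gr K n 0 : Submodule K _) = ⊥ := by
        rw [eq_bot_iff]
        rintro p ⟨h1, h2⟩
        have h3 : p.IsHomogeneous 0 := mem_gr_nat.1 (by exact_mod_cast h2)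
        have h4 := mem_m_iff.1 h1
        rw [← totalDegree_zero_iff_isHomogeneous, totalDegree_eq_zero_iff_eq_C] at h3
        rw [h3, ← constantCoeff_eq, h4, map_zero]
        exact Submodule.zero_mem _
      rw [gd, this, finrank_bot, Nat.cast_zero]
    have h2 : gd (gr K n) ⊤ 0 = 1 := by
      have : ((⊤ : Ideal (MvPolynomial (Fin n) K)).restrictScalars K ⊓
          gr K n 0 : Submodule K _) = Submodule.span K {1} := by
        apply le_antisymm
        · rintro p ⟨-, h2⟩
          have h3 : p.IsHomogeneous 0 := mem_gr_nat.1 (by exact_mod_cast h2)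
          rw [← totalDegree_zero_iff_isHomogeneous, totalDegree_eq_zero_iff_eq_C] at h3
          rw [Submodule.mem_span_singleton]
          exact ⟨coeff 0 p, by rw [smul_eq_C_mul, mul_one]; exact h3.symm⟩
        · rw [Submodule.span_singleton_le_iff_mem]
          exact ⟨trivial, by simpa using mem_gr_nat.2 (isHomogeneous_one (Fin n) K)⟩
      rw [gd, this, finrank_span_singleton one_ne_zero, Nat.cast_one]
    simp [hilb, h1, h2]
  · rw [Pi.single_eq_of_ne hi, hilb, sub_eq_zero]
    refine gd_congr fun p hp => ⟨fun _ => ?_, fun _ => trivial⟩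
    rw [mem_m_iff, constantCoeff_eq]
    by_contra h0
    exact hi (by simpa using (mem_gr.1 hp 0 (mem_support_iff.2 h0)).symm)

end Poly

/-! ### Infinite ground fields -/

section Infinite

open Matrix

variable {K : Type*} [Field K] {n : ℕ}

lemma eq_C_of_mem_gr_zero {p : MvPolynomial (Fin n) K} (hp : p ∈ gr K n 0) :
    p = C (constantCoeff p) := by
  have h : p.IsHomogeneous 0 := mem_gr_nat.1 (by exact_mod_cast hp)
  rwa [← totalDegree_zero_iff_isHomogeneous, totalDegree_eq_zero_iff_eq_C] at h

lemma le_m_of_homog {Q : Ideal (MvPolynomial (Fin n) K)} (hQ : Q.IsHomogeneous (gr K n))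
    (hQ1 : Q ≠ ⊤) : Q ≤ Ideal.span (Set.range X) := by
  intro p hp
  rw [mem_m_iff]
  by_contra h0
  have hC : C (constantCoeff p) ∈ gr K n 0 := by
    simpa using mem_gr_nat.2 (isHomogeneous_C (Fin n) (constantCoeff p))
  have hm : (Ideal.span (Set.range (X : Fin n → MvPolynomial (Fin n) K))).IsHomogeneous
      (gr K n) := by
    rw [← varIdeal_self]; exact varIdeal_homog n
  -- the degree zero component of `p` is its constant coefficient
  have h1 : (DirectSum.decompose (gr K n) (p - C (constantCoeff p)) 0 :
      MvPolynomial (Fin n) K) = 0 := by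
    have h2 := hm 0 (mem_m_iff.2 (by simp) : p - C (constantCoeff p) ∈ _)
    rw [eq_C_of_mem_gr_zero (SetLike.coe_mem _), mem_m_iff.1 h2, map_zero]
  rw [DirectSum.decompose_sub, DirectSum.sub_apply, AddSubgroupClass.coe_sub,
    DirectSum.decompose_of_mem_same (gr K n) hC, sub_eq_zero] at h1
  have h2 := hQ 0 hp
  rw [h1] at h2
  exact hQ1 (Ideal.eq_top_of_isUnit_mem _ h2 ((isUnit_iff_ne_zero.2 h0).map C))

/-- If `I` defines a scheme of dimension at most one and the linear form `ℓ` avoids the minimal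
primes of `I` different from `m`, then `I + (ℓ)` is `m`-primary. -/
lemma pow_le_adj {I : Ideal (MvPolynomial (Fin n) K)} (hI : I.IsHomogeneous (gr K n))
    (hch : ∀ P Q : Ideal (MvPolynomial (Fin n) K), P.IsPrime → Q.IsPrime → I ≤ P → P < Q →
      Q ≤ Ideal.span (Set.range X) → Ideal.span (Set.range X) ≤ Q)
    {l : MvPolynomial (Fin n) K} (hl : l ∈ gr K n 1)
    (hS : ∀ P ∈ I.minimalPrimes, (∃ i, X i ∉ P) → l ∉ P) :
    ∃ N, Ideal.span (Set.range (X : Fin n → MvPolynomial (Fin n) K)) ^ N ≤ adj I l := by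
  refine Ideal.exists_pow_le_of_le_radical_of_fg ?_ (IsNoetherian.noetherian _)
  rw [(isHomogeneous_adj hI hl).radical_eq]
  refine le_sInf ?_
  rintro Q ⟨hQh, hIQ, hQ⟩
  obtain ⟨P, hP, hPQ⟩ := Ideal.exists_minimalPrimes_le ((le_adj I l).trans hIQ)
  by_cases h : ∃ i, X i ∉ P
  · have hlP := hS P hP h
    have hlQ : l ∈ Q := hIQ (mem_adj.2 ⟨1, by simp⟩)
    exact hch P Q hP.1.1 hQ hP.1.2 (lt_of_le_of_ne hPQ (by rintro rfl; exact hlP hlQ))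
      (le_m_of_homog hQh hQ.ne_top)
  · push Not at h
    refine le_trans (Ideal.span_le.2 ?_) hPQ
    rintro _ ⟨i, rfl⟩
    exact h i

/-- Linearly independent vectors of number two less than the dimension extend to a basis. -/
lemma exists_basis {m : ℕ} {α : Type} [Fintype α] {v : α → Fin (m + 2) → K}
    (hv : LinearIndependent K v) (hcard : Fintype.card α = m) :
    ∃ B : Module.Basis (α ⊕ Fin 2) K (Fin (m + 2) → K), ∀ j, B (Sum.inl j) = v j := by
  let T : Type _ := Module.Basis.sumExtendIndex hv
  let B₀ : Module.Basis (α ⊕ T) K (Fin (m + 2) → K) := Module.Basis.sumExtend hv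
  have hfin : Finite (α ⊕ T) := Module.Finite.finite_basis B₀
  have hT : Finite T := Finite.of_injective (Sum.inr : T → α ⊕ T) Sum.inr_injective
  have h1 := Module.finrank_eq_nat_card_basis B₀
  rw [Nat.card_sum, Nat.card_eq_fintype_card, hcard, Module.finrank_fin_fun] at h1
  have e : T ≃ Fin 2 := Finite.equivFinOfCardEq (by omega)
  refine ⟨B₀.reindex (Equiv.sumCongr (Equiv.refl α) e), fun j => ?_⟩
  simp [B₀, T, Module.Basis.sumExtend]
  rfl

/-- The theorem over an infinite field, with the hypothesis on the dimension weakened to the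
absence of chains of primes `I ⊆ P ⊊ Q ⊊ m`. -/
lemma main_infinite [Infinite K] {m c : ℕ} (hm : 2 ≤ m) (hc : 1 ≤ c)
    (f : Fin (m + 2) → MvPolynomial (Fin (m + 1)) K)
    (hfh : ∀ i, (f i).IsHomogeneous (c + 1)) (hfl : LinearIndependent K f)
    (hch : ∀ P Q : Ideal (MvPolynomial (Fin (m + 1)) K), P.IsPrime → Q.IsPrime →
      Ideal.span (Set.range f) ≤ P → P < Q →
      Q ≤ Ideal.span (Set.range X) → Ideal.span (Set.range X) ≤ Q)
    {ν₀ : ℕ} (hν₀ : ν₀ = ((m + 1) * c + 2) / 2)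
    (hA : ∀ e : ℕ, e + (c + 1) ≤ ν₀ → ∀ a : Fin (m + 2) → MvPolynomial (Fin (m + 1)) K,
      (∀ i, (a i).IsHomogeneous e) → a ⬝ᵥ f = 0 → a ∈ kB f)
    (hB : ∀ a : Fin (m + 2) → MvPolynomial (Fin (m + 1)) K,
      (∀ i, (a i).IsHomogeneous ν₀) → a ⬝ᵥ f = 0 →
      (∃ M : ℕ, ∀ e ∈ Ideal.span (Set.range (X : Fin (m + 1) → MvPolynomial (Fin (m + 1)) K)) ^ M,
        e • a ∈ kB f) → a ∈ kB f) : False := by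
  set 𝒜 := gr K (m + 1) with h𝒜
  set F : (Fin (m + 2) → K) →ₗ[K] MvPolynomial (Fin (m + 1)) K := Fintype.linearCombination K f
    with hFdef
  have hFi : Function.Injective F := hfl.fintypeLinearCombination_injective
  have hF : ∀ v, F v ∈ 𝒜 (c + 1 : ℕ) := by
    intro v
    rw [hFdef, Fintype.linearCombination_apply]
    exact Submodule.sum_mem _ fun i _ => Submodule.smul_mem _ _ (mem_gr_nat.2 (hfh i))
  have hFx : ∀ v, F v ∈ Ideal.span (Set.range X) := by
    intro v
    rw [mem_m_iff, constantCoeff_eq]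
    by_contra h0
    have := mem_gr.1 (hF v) 0 (mem_support_iff.2 h0)
    simp at this
    omega
  have hspan : Ideal.span (Set.range F) = Ideal.span (Set.range f) := by
    apply le_antisymm <;> rw [Ideal.span_le]
    · rintro _ ⟨v, rfl⟩
      rw [hFdef, Fintype.linearCombination_apply]
      refine Ideal.sum_mem _ fun i _ => ?_
      rw [smul_eq_C_mul]
      exact Ideal.mul_mem_left _ _ (Ideal.subset_span ⟨i, rfl⟩)
    · rintro _ ⟨i, rfl⟩
      refine Ideal.subset_span ⟨Pi.single i 1, ?_⟩
      simp [hFdef, Fintype.linearCombination_apply_single]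
  have hIh : (Ideal.span (Set.range f)).IsHomogeneous 𝒜 :=
    Ideal.homogeneous_span _ _ (by rintro _ ⟨i, rfl⟩; exact ⟨_, mem_gr_nat.2 (hfh i)⟩)
  have hT₀ : GorT 𝒜 X (m + 1) ⊥ (-((m + 1 : ℕ) : ℤ)) := by
    have := gorT_varIdeal (K := K) (n := m + 1) (m + 1) 0 (by omega)
    rwa [varIdeal_zero] at this
  obtain ⟨α, _, _, v, hcard, hv, hreg, hT, hbh⟩ := exists_seq (𝒜 := 𝒜) (x := X) (F := F)
    (fun i hi => gr_neg hi) (fun i => X_mem_gr i) hF hFx hT₀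
    (S := {P ∈ (Ideal.span (Set.range f)).minimalPrimes | ∃ i, X i ∉ P})
    ((Ideal.finite_minimalPrimes_of_isNoetherianRing _ _).subset (Set.sep_subset _ _))
    (fun P hP => hP.2) (fun v hv => by
      rw [hspan]
      exact pow_le_adj hIh hch (lin_mem (fun i => X_mem_gr i) v) fun P hP h => hv P ⟨hP, h⟩)
    m 0 rfl
  -- complete the general elements to a basis of the linear system
  obtain ⟨B, hBl⟩ := exists_basis hv hcard
  let M : Matrix (α ⊕ Fin 2) (Fin (m + 2)) (MvPolynomial (Fin (m + 1)) K) :=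
    Matrix.of fun j i => C (B j i)
  let M' : Matrix (Fin (m + 2)) (α ⊕ Fin 2) (MvPolynomial (Fin (m + 1)) K) :=
    Matrix.of fun i j => C (B.repr (Pi.single i 1) j)
  have hM'M : M' * M = 1 := by
    ext1 i l
    have h1 := congrFun (B.sum_repr (Pi.single i 1)) l
    rw [Finset.sum_apply] at h1
    simp only [M, M', Matrix.mul_apply, Matrix.of_apply, ← C_mul, ← map_sum]
    simp only [Pi.smul_apply, smul_eq_mul] at h1
    rw [h1, Matrix.one_apply, Pi.single_apply]
    by_cases h : i = l
    · simp [h]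
    · simp [h, Ne.symm h]
  have hMM' : M * M' = 1 := by
    refine (Matrix.mul_eq_one_comm_of_card_eq _ _ _ ?_).1 hM'M
    simp [hcard]
  set g : α ⊕ Fin 2 → MvPolynomial (Fin (m + 1)) K := fun j => F (B j) with hgdef
  have hg : M *ᵥ f = g := by
    funext j
    simp [M, hgdef, hFdef, Matrix.mulVec, dotProduct, Fintype.linearCombination_apply,
      smul_eq_C_mul]
  have hf : M' *ᵥ g = f := by rw [← hg, Matrix.mulVec_mulVec, hM'M, Matrix.one_mulVec]
  have hgl : g ∘ Sum.inl = F ∘ v := by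
    funext j
    simp [hgdef, hBl]
  have hdeg : ∀ {e : ℤ} {a : α ⊕ Fin 2 → MvPolynomial (Fin (m + 1)) K},
      (∀ j, a j ∈ 𝒜 e) → ∀ i, (a ᵥ* M) i ∈ 𝒜 e := by
    intro e a ha i
    refine Submodule.sum_mem _ fun j _ => ?_
    simp only [M, Matrix.of_apply]
    rw [mul_comm, ← smul_eq_C_mul]
    exact Submodule.smul_mem _ _ (ha j)
  have hdot : ∀ a : α ⊕ Fin 2 → MvPolynomial (Fin (m + 1)) K, a ⬝ᵥ g = 0 → (a ᵥ* M) ⬝ᵥ f = 0 := by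
    intro a ha
    rwa [← Matrix.dotProduct_mulVec, hg]
  have hto : ∀ a : α ⊕ Fin 2 → MvPolynomial (Fin (m + 1)) K, a ᵥ* M ∈ kB f → a ∈ kB g := by
    intro a ha
    have := kB_vecMul g M' (by rwa [hf] : a ᵥ* M ∈ kB (M' *ᵥ g))
    rwa [Matrix.vecMul_vecMul, hMM', Matrix.vecMul_one] at this
  have hne : ∀ j, g j ≠ 0 := by
    intro j h
    exact B.ne_zero j (hFi (by rw [map_zero]; exact h))
  refine core (𝒜 := 𝒜) (x := X) (g := g) (fun i hi => gr_neg hi) (fun i => X_mem_gr i) hm hc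
    hilb_bot (fun j => hF _) (hne _) (hne _) (b := Ideal.span (Set.range (F ∘ v)))
    (by rw [hgl]) (by rwa [hgl]) hT hbh (ν₀ := ν₀) (by rw [hν₀]) ?_ ?_
  · intro e he a ha hag
    by_cases he0 : e < 0
    · have : a = 0 := by
        funext j
        have := ha j
        rwa [h𝒜, gr_neg he0, Submodule.mem_bot] at this
      rw [this]
      exact Submodule.zero_mem _
    · obtain ⟨e, rfl⟩ := Int.eq_ofNat_of_zero_le (not_lt.1 he0)
      refine hto a (hA e (by exact_mod_cast he) _ (fun i => mem_gr_nat.1 (hdeg ha i)) (hdot a hag))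
  · rintro a ha hag ⟨N, hN⟩
    refine hto a (hB _ (fun i => mem_gr_nat.1 (hdeg ha i)) (hdot a hag) ⟨N, fun e he => ?_⟩)
    have := kB_vecMul f M (by rw [hg]; exact hN e he)
    rwa [Matrix.smul_vecMul] at this

end Infinite

/-! ### Extension of the ground field -/

section BaseChange

open Matrix hiding map

variable {k K : Type*} [Field k] [Field K] [Algebra k K] {σ ι : Type*}

/-- The `k[X]`-linear map `K[X] → k[X]` applying a `k`-linear functional to the coefficients. -/
def coeffMap (φ : K →ₗ[k] k) (p : MvPolynomial σ K) : MvPolynomial σ k :=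
  ∑ m ∈ p.support, monomial m (φ (coeff m p))

lemma coeff_coeffMap (φ : K →ₗ[k] k) (p : MvPolynomial σ K) (m : σ →₀ ℕ) :
    coeff m (coeffMap φ p) = φ (coeff m p) := by
  classical
  rw [coeffMap, coeff_sum]
  simp only [coeff_monomial]
  rw [Finset.sum_ite_eq' p.support m]
  split_ifs with h
  · rfl
  · rw [notMem_support_iff.1 h, map_zero]

lemma coeffMap_zero (φ : K →ₗ[k] k) : coeffMap φ (0 : MvPolynomial σ K) = 0 := by
  simp [coeffMap]

lemma coeffMap_add (φ : K →ₗ[k] k) (p q : MvPolynomial σ K) :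
    coeffMap φ (p + q) = coeffMap φ p + coeffMap φ q := by
  ext m
  simp [coeff_coeffMap]

lemma coeffMap_sub (φ : K →ₗ[k] k) (p q : MvPolynomial σ K) :
    coeffMap φ (p - q) = coeffMap φ p - coeffMap φ q := by
  ext m
  simp [coeff_coeffMap]

lemma coeffMap_sum (φ : K →ₗ[k] k) (s : Finset ι) (p : ι → MvPolynomial σ K) :
    coeffMap φ (∑ i ∈ s, p i) = ∑ i ∈ s, coeffMap φ (p i) := by
  ext m
  simp [coeff_coeffMap, coeff_sum]

lemma coeffMap_mul_map (φ : K →ₗ[k] k) (p : MvPolynomial σ K) (q : MvPolynomial σ k) :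
    coeffMap φ (p * map (algebraMap k K) q) = coeffMap φ p * q := by
  classical
  ext m
  rw [coeff_coeffMap, coeff_mul, coeff_mul, map_sum]
  refine Finset.sum_congr rfl fun x _ => ?_
  rw [coeff_map, coeff_coeffMap, mul_comm, ← Algebra.smul_def, map_smul, smul_eq_mul, mul_comm]

lemma coeffMap_homog (φ : K →ₗ[k] k) {p : MvPolynomial σ K} {e : ℕ} (hp : p.IsHomogeneous e) :
    (coeffMap φ p).IsHomogeneous e := by
  intro m hm
  rw [coeff_coeffMap] at hm
  exact hp fun h => hm (by rw [h, map_zero])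

variable [DecidableEq ι] [Fintype ι]

omit [Fintype ι] in
/-- Koszul boundaries descend along `coeffMap`. The induction needs the boundary condition for all
multiples of `a`, since `coeffMap φ` is only linear over `k[X]`. -/
lemma kB_coeffMap (φ : K →ₗ[k] k) {f : ι → MvPolynomial σ k} {a : ι → MvPolynomial σ K}
    (ha : a ∈ kB fun i => MvPolynomial.map (algebraMap k K) (f i)) :
    (fun i => coeffMap φ (a i)) ∈ kB f := by
  suffices h : ∀ c : MvPolynomial σ K, (fun i => coeffMap φ (c * a i)) ∈ kB f by
    simpa using h 1
  induction ha using Submodule.span_induction with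
  | mem v hv =>
    obtain ⟨i, j, rfl⟩ := hv
    intro c
    have h : (fun l => coeffMap φ (c * (Pi.single j (MvPolynomial.map (algebraMap k K) (f i)) -
        Pi.single i (MvPolynomial.map (algebraMap k K) (f j)) : ι → MvPolynomial σ K) l)) =
        coeffMap φ c • (Pi.single j (f i) - Pi.single i (f j) : ι → MvPolynomial σ k) := by
      funext l
      have h1 : ∀ (s : ι) (q : MvPolynomial σ k), coeffMap φ
          (c * (Pi.single s (MvPolynomial.map (algebraMap k K) q) : ι → MvPolynomial σ K) l) =
          coeffMap φ c * (Pi.single s q : ι → MvPolynomial σ k) l := by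
        intro s q
        by_cases hs : l = s
        · subst hs
          rw [Pi.single_eq_same, Pi.single_eq_same, coeffMap_mul_map]
        · rw [Pi.single_eq_of_ne hs, Pi.single_eq_of_ne hs, mul_zero, mul_zero, coeffMap_zero]
      rw [Pi.sub_apply, mul_sub, coeffMap_sub, h1, h1, Pi.smul_apply, Pi.sub_apply, smul_eq_mul,
        mul_sub]
    rw [h]
    exact (kB f).smul_mem _ (Submodule.subset_span ⟨i, j, rfl⟩)
  | zero =>
    intro c
    convert (kB f).zero_mem using 1
    funext l
    simp [coeffMap_zero]
  | add u v _ _ hu hv =>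
    intro c
    convert (kB f).add_mem (hu c) (hv c) using 1
    funext l
    simp [mul_add, coeffMap_add]
  | smul b v _ hv =>
    intro c
    convert hv (c * b) using 1
    funext l
    simp [mul_assoc]

omit [Fintype ι] in
lemma kB_map {f : ι → MvPolynomial σ k} {a : ι → MvPolynomial σ k} (ha : a ∈ kB f) :
    (fun i => map (algebraMap k K) (a i)) ∈ kB fun i => map (algebraMap k K) (f i) := by
  induction ha using Submodule.span_induction with
  | mem v hv =>
    obtain ⟨i, j, rfl⟩ := hv
    refine Submodule.subset_span ⟨i, j, ?_⟩
    funext l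
    simp only [Pi.sub_apply, map_sub, Pi.single_apply]
    congr 1 <;> split_ifs <;> simp
  | zero =>
    convert Submodule.zero_mem _ using 1
    funext l
    simp
  | add u v _ _ hu hv =>
    convert Submodule.add_mem _ hu hv using 1
    funext l
    simp
  | smul b v _ hv =>
    convert Submodule.smul_mem _ (map (algebraMap k K) b) hv using 1
    funext l
    simp

/-- A vector over `K[X]` is a Koszul boundary as soon as all its components with respect to a
`k`-basis of `K` are. -/
lemma kB_of_coeffMap {f : ι → MvPolynomial σ k} {a : ι → MvPolynomial σ K}
    (h : ∀ φ : K →ₗ[k] k, (fun i => coeffMap φ (a i)) ∈ kB f) :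
    a ∈ kB fun i => map (algebraMap k K) (f i) := by
  classical
  let b := Module.Basis.ofVectorSpace k K
  let Λ := Finset.univ.biUnion fun i => (a i).support.biUnion fun m =>
    (b.repr (coeff m (a i))).support
  have ha : a = ∑ l ∈ Λ, (C (b l) : MvPolynomial σ K) •
      fun i => map (algebraMap k K) (coeffMap (b.coord l) (a i)) := by
    funext i
    ext m
    rw [Finset.sum_apply, coeff_sum]
    simp only [Pi.smul_apply, smul_eq_mul, coeff_C_mul, coeff_map, coeff_coeffMap,
      Module.Basis.coord_apply]
    conv_lhs => rw [← b.linearCombination_repr (coeff m (a i)), Finsupp.linearCombination_apply]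
    rw [Finsupp.sum_of_support_subset (s := Λ)]
    · exact Finset.sum_congr rfl fun l _ => by rw [Algebra.smul_def, mul_comm]
    · intro l hl
      refine Finset.mem_biUnion.2 ⟨i, Finset.mem_univ _, Finset.mem_biUnion.2 ⟨m, ?_, hl⟩⟩
      rw [mem_support_iff]
      intro h0
      rw [h0] at hl
      simp at hl
    · simp
  rw [ha]
  exact Submodule.sum_mem _ fun l _ => Submodule.smul_mem _ _ (kB_map (h (b.coord l)))

omit [DecidableEq ι] in
lemma linearIndependent_map {f : ι → MvPolynomial σ k} (hf : LinearIndependent k f) :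
    LinearIndependent K fun i => map (algebraMap k K) (f i) := by
  rw [Fintype.linearIndependent_iff] at hf ⊢
  intro v hv i
  rw [← Module.forall_dual_apply_eq_zero_iff k]
  intro φ
  refine hf (fun i => φ (v i)) ?_ i
  have h := congrArg (coeffMap φ) hv
  rw [coeffMap_sum, coeffMap_zero] at h
  rw [← h]
  refine Finset.sum_congr rfl fun j _ => ?_
  ext m
  rw [smul_eq_C_mul, smul_eq_C_mul, coeff_C_mul, coeff_coeffMap, coeff_C_mul, coeff_map,
    mul_comm (v j), ← Algebra.smul_def, map_smul, smul_eq_mul, mul_comm]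

omit [DecidableEq ι] [Fintype ι] in
/-- The dimension hypothesis, contracted along the integral extension `k[X] → K[X]`. -/
lemma no_chain [Algebra.IsIntegral k K] {n : ℕ} {f : ι → MvPolynomial (Fin n) k}
    (hdim : ringKrullDim (MvPolynomial (Fin n) k ⧸ Ideal.span (Set.range f)) ≤ 1)
    (P Q : Ideal (MvPolynomial (Fin n) K)) (hP : P.IsPrime) (hQ : Q.IsPrime)
    (hIP : Ideal.span (Set.range fun i => map (algebraMap k K) (f i)) ≤ P) (hPQ : P < Q)
    (hQm : Q ≤ Ideal.span (Set.range X)) : Ideal.span (Set.range X) ≤ Q := by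
  let := MvPolynomial.algebraMvPolynomial (R := k) (S := K) (σ := Fin n)
  let A := MvPolynomial (Fin n) k
  let ψ : A →+* MvPolynomial (Fin n) K := algebraMap _ _
  have hψ' : ψ = map (algebraMap k K) := rfl
  have hlt : P.comap ψ < Q.comap ψ := Ideal.IsIntegral.comap_lt_comap hPQ
  have hIp : Ideal.span (Set.range f) ≤ P.comap ψ := by
    rw [Ideal.span_le]
    rintro _ ⟨i, rfl⟩
    exact hIP (Ideal.subset_span ⟨i, rfl⟩)
  have hqm : Q.comap ψ ≤ Ideal.span (Set.range X) := by
    intro p hp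
    have := mem_m_iff.1 (hQm hp)
    rw [hψ', constantCoeff_map] at this
    rw [mem_m_iff]
    exact (algebraMap k K).injective (by rw [this, map_zero])
  have hmp : (Ideal.span (Set.range (X : Fin n → A))).IsPrime := by
    have : Ideal.span (Set.range (X : Fin n → A)) = RingHom.ker (constantCoeff : A →+* k) := by
      ext p
      rw [mem_m_iff, RingHom.mem_ker]
    rw [this]
    exact RingHom.ker_isPrime _
  have hqeq : Q.comap ψ = Ideal.span (Set.range X) := by
    by_contra hne
    have hlt' := lt_of_le_of_ne hqm hne
    rw [ringKrullDim_quotient] at hdim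
    let p₀ : PrimeSpectrum.zeroLocus (R := A) (Ideal.span (Set.range f)) :=
      ⟨⟨P.comap ψ, hP.comap ψ⟩, hIp⟩
    let p₁ : PrimeSpectrum.zeroLocus (R := A) (Ideal.span (Set.range f)) :=
      ⟨⟨Q.comap ψ, hQ.comap ψ⟩, hIp.trans hlt.le⟩
    let p₂ : PrimeSpectrum.zeroLocus (R := A) (Ideal.span (Set.range f)) :=
      ⟨⟨_, hmp⟩, hIp.trans (hlt.le.trans hlt'.le)⟩
    have h01 : p₀ < p₁ := hlt
    have h12 : p₁ < p₂ := hlt'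
    let s : LTSeries (PrimeSpectrum.zeroLocus (R := A) (Ideal.span (Set.range f))) :=
      ⟨2, ![p₀, p₁, p₂], fun i => by fin_cases i; exacts [h01, h12]⟩
    have h2 := Order.LTSeries.length_le_krullDim s
    have h3 : s.length = 2 := rfl
    rw [h3] at h2
    exact absurd (h2.trans hdim) (by norm_num)
  rw [Ideal.span_le]
  rintro _ ⟨i, rfl⟩
  have h : (X i : A) ∈ Q.comap ψ := hqeq ▸ Ideal.subset_span ⟨i, rfl⟩
  rw [Ideal.mem_comap, hψ', map_X] at h
  exact h

lemma koszulB1_eq {n : ℕ} (f : Fin (n + 1) → MvPolynomial (Fin n) k) : koszulB1 f = kB f := by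
  apply le_antisymm
  · refine Submodule.span_mono ?_
    rintro v ⟨i, j, -, h⟩
    exact ⟨i, j, h⟩
  · refine Submodule.span_le.2 ?_
    rintro v ⟨i, j, rfl⟩
    rcases lt_trichotomy i j with h | rfl | h
    · exact Submodule.subset_span ⟨i, j, h, rfl⟩
    · rw [sub_self]
      exact Submodule.zero_mem _
    · rw [← neg_sub]
      exact Submodule.neg_mem _ (Submodule.subset_span ⟨j, i, h, rfl⟩)

lemma notMem_of_indegE {s : Set ℕ} {b : ℕ} {ν : ℕ} (h : ¬ indegE s ≤ (b : ℕ∞)) (hν : ν ≤ b) :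
    ν ∉ s := fun hs => h (le_trans (sInf_le ⟨ν, hs, rfl⟩) (by exact_mod_cast hν))

end BaseChange

/-- If `n ≥ 3`, `d ≥ 2`, `dim(R/I) ≤ 1` and `I` is locally generated by at most
`height(p)+1` elements at every prime `p ⊇ I`, then
`μ₀(I) ≥ ⌊((n-2)(d-1)-1)/2⌋`, i.e.
`min{ indeg(H₁), indeg(H⁰_m(H₁)) - d } ≤ ⌈(n(d-1)+1)/2⌉`. -/
theorem threshold_lower_bound
    (k : Type*) [Field k] (n d : ℕ) (hn : 3 ≤ n) (hd : 2 ≤ d)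
    (f : Fin (n+1) → MvPolynomial (Fin n) k)
    (hfh : ∀ i, (f i).IsHomogeneous d)
    (hfl : LinearIndependent k f)
    (I : Ideal (MvPolynomial (Fin n) k)) (hI : I = Ideal.span (Set.range f))
    (hdim : ringKrullDim (MvPolynomial (Fin n) k ⧸ I) ≤ 1)
    (hloc : ∀ (p : Ideal (MvPolynomial (Fin n) k)) (hp : p.IsPrime), I ≤ p →
      ∃ s : Finset (Localization.AtPrime p),
        Ideal.span (s : Set (Localization.AtPrime p)) =
          I.map (algebraMap (MvPolynomial (Fin n) k) (Localization.AtPrime p)) ∧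
        (s.card : ℕ∞) ≤
          Order.height (⟨p, hp⟩ : PrimeSpectrum (MvPolynomial (Fin n) k)) + 1) :
    indegE {ν | H1Nonzero f d ν} ≤ (((n * (d - 1) + 2) / 2 : ℕ) : ℕ∞) ∨
      indegE {ν | H0mH1Nonzero f d ν} ≤ (((n * (d - 1) + 2) / 2 + d : ℕ) : ℕ∞) := by
  by_contra! hcon
  obtain ⟨h1, h2⟩ := hcon
  subst hI
  obtain ⟨m, rfl⟩ : ∃ m, n = m + 1 := ⟨n - 1, by omega⟩
  obtain ⟨c, rfl⟩ : ∃ c, d = c + 1 := ⟨d - 1, by omega⟩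
  rw [Nat.add_sub_cancel] at h1 h2
  set ν₀ := ((m + 1) * c + 2) / 2 with hν₀
  have hinf : Infinite (AlgebraicClosure k) := inferInstance
  let φ := algebraMap k (AlgebraicClosure k)
  -- coefficientwise descent of syzygies along a functional `ψ`
  have hsyz : ∀ (ψ : AlgebraicClosure k →ₗ[k] k)
      (a : Fin (m + 2) → MvPolynomial (Fin (m + 1)) (AlgebraicClosure k)),
      (a ⬝ᵥ fun i => map φ (f i)) = 0 → ∑ i, coeffMap ψ (a i) * f i = 0 := by
    intro ψ a ha
    have h := congrArg (coeffMap ψ) ha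
    rw [dotProduct, coeffMap_sum, coeffMap_zero] at h
    rw [← h]
    exact Finset.sum_congr rfl fun i _ => (coeffMap_mul_map ψ _ _).symm
  refine main_infinite (K := AlgebraicClosure k) (m := m) (c := c) (by omega) (by omega)
    (fun i => map φ (f i)) (fun i => (hfh i).map φ) (linearIndependent_map hfl)
    (no_chain hdim) hν₀ ?_ ?_
  · intro e he a ha hdot
    refine kB_of_coeffMap fun ψ => ?_
    by_contra hk
    rw [← koszulB1_eq] at hk
    exact notMem_of_indegE (not_le.2 h1) he
      ⟨_, e, rfl, fun i => coeffMap_homog ψ (ha i), hsyz ψ a hdot, hk⟩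
  · rintro a ha hdot ⟨N, hN⟩
    refine kB_of_coeffMap fun ψ => ?_
    by_contra hk
    rw [← koszulB1_eq] at hk
    refine notMem_of_indegE (not_le.2 h2) le_rfl
      ⟨_, ν₀, rfl, fun i => coeffMap_homog ψ (ha i), hsyz ψ a hdot, ⟨N, fun g hg => ?_⟩, hk⟩
    rw [koszulB1_eq]
    have hle : (mIdeal k (m + 1) ^ N).map (map φ) ≤ Ideal.span (Set.range X) ^ N := by
      rw [Ideal.map_pow]
      refine Ideal.pow_right_mono (Ideal.map_le_iff_le_comap.2 (Ideal.span_le.2 ?_)) N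
      rintro _ ⟨i, rfl⟩
      exact Ideal.subset_span ⟨i, (map_X φ i).symm⟩
    have h := kB_coeffMap ψ (hN _ (hle (Ideal.mem_map_of_mem _ hg)))
    convert h using 1
    funext i
    rw [Pi.smul_apply, Pi.smul_apply, smul_eq_mul, smul_eq_mul, mul_comm (map φ g),
      coeffMap_mul_map, mul_comm]

end
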